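/- arXiv:math/9803126 — 12 statements merged into one kernel-verified Lean document; each statement's English description precedes it below -/
import Mathlib

section
/- Let n, k be natural numbers with k ≥ 2 and let v : Fin k → ℤ^n be a family of lattice vectors such that (i) the family (v i), viewed in ℚ^n, is ℚ-linearly dependent, (ii) for every index i the subfamily (v α)_{α ≠ i} is ℚ-linearly independent, and (iii) for every index i the subfamily (v α)_{α ≠ i} is unimodular. Then every nonzero r : Fin k → ℚ with ∑ i, r i • v i = 0 satisfies |r i| = |r j| for all i, j. Moreover, if w : Fin k → ℚ is such that the lifted family of vectors (v i, w i) ∈ ℚ^n × ℚ is ℚ-linearly independent, then there exists ε : Fin k → ℚ with ε i ∈ {1, −1} for every i, ∑ i, ε i • v i = 0 and ∑ i, (ε i) * (w i) > 0, and every r : Fin k → ℚ with ∑ i, r i • v i = 0 is a scalar multiple of ε. -/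
/-- The coercion of an integer lattice vector to a rational vector. -/
def castQ {n : ℕ} (x : Fin n → ℤ) : Fin n → ℚ := fun j => (x j : ℚ)

/-- A family of lattice vectors is unimodular if it is `ℚ`-linearly independent and the
subgroup of `ℤ^n` it generates equals the set of all lattice points lying in its
`ℚ`-linear span. -/
def IsUnimodular {n : ℕ} {ι : Type*} (v : ι → Fin n → ℤ) : Prop :=
  LinearIndependent ℚ (fun i => castQ (v i)) ∧
  ∀ z : Fin n → ℤ,
    z ∈ Submodule.span ℤ (Set.range v) ↔
      castQ z ∈ Submodule.span ℚ (Set.range fun i => castQ (v i))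

lemma aux_zero {n k : ℕ} (v : Fin k → Fin n → ℤ)
    (hindep : ∀ i : Fin k,
      LinearIndependent ℚ (fun α : {α : Fin k // α ≠ i} => castQ (v α)))
    (r : Fin k → ℚ) (hr : ∑ i, r i • castQ (v i) = 0) (i : Fin k) (hi : r i = 0) : r = 0 := by
  rw [Fintype.sum_eq_add_sum_subtype_ne _ i, hi, zero_smul, zero_add] at hr
  have h := Fintype.linearIndependent_iff.1 (hindep i) (fun α => r α) hr
  funext j
  by_cases hj : j = i
  · rw [hj, hi]; rfl
  · exact h ⟨j, hj⟩

lemma castQ_sum {n : ℕ} {ι : Type*} [Fintype ι] (c : ι → ℤ) (u : ι → Fin n → ℤ) :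
    castQ (∑ a, c a • u a) = ∑ a, (c a : ℚ) • castQ (u a) := by
  funext j
  simp [castQ, Finset.sum_apply]

lemma aux_int {n k : ℕ} (v : Fin k → Fin n → ℤ)
    (huni : ∀ i : Fin k, IsUnimodular (fun α : {α : Fin k // α ≠ i} => v (α : Fin k)))
    (r : Fin k → ℚ) (hr : ∑ i, r i • castQ (v i) = 0) (hr0 : r ≠ 0) (i : Fin k) :
    ∃ s : Fin k → ℤ, ∀ j, r j = r i * s j := by
  have hindep := fun i => (huni i).1
  have hi : r i ≠ 0 := fun h => hr0 (aux_zero v hindep r hr i h)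
  have hmem : castQ (v i) ∈ Submodule.span ℚ
      (Set.range fun α : {α : Fin k // α ≠ i} => castQ (v α)) := by
    rw [Submodule.mem_span_range_iff_exists_fun]
    refine ⟨fun α => -(r i)⁻¹ * r α, ?_⟩
    rw [Fintype.sum_eq_add_sum_subtype_ne _ i] at hr
    simp only [mul_smul]
    rw [← Finset.smul_sum, ← neg_eq_of_add_eq_zero_right hr, smul_neg, neg_smul, neg_neg,
      smul_smul, inv_mul_cancel₀ hi, one_smul]
  have hz := ((huni i).2 (v i)).2 hmem
  rw [Submodule.mem_span_range_iff_exists_fun] at hz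
  obtain ⟨c, hc⟩ := hz
  let s : Fin k → ℤ := fun j => if h : j ≠ i then -c ⟨j, h⟩ else 1
  have hsi : s i = 1 := by simp [s]
  have hsα : ∀ α : {α : Fin k // α ≠ i}, s α = - c α := fun α => by simp [s, α.2]
  have hs : ∑ j, (s j : ℚ) • castQ (v j) = 0 := by
    rw [Fintype.sum_eq_add_sum_subtype_ne _ i, hsi]
    simp only [hsα, Int.cast_neg, neg_smul, Finset.sum_neg_distrib]
    rw [← castQ_sum c (fun α : {α : Fin k // α ≠ i} => v α), hc]
    simp
  refine ⟨s, fun j => ?_⟩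
  have h0 := aux_zero v hindep (fun j => r j - r i * s j) (by
    simp only [sub_smul, mul_smul, Finset.sum_sub_distrib, ← Finset.smul_sum, hs, hr]
    simp) i (by simp [hsi])
  have := congrFun h0 j
  simp only [Pi.zero_apply] at this
  linarith

lemma aux_abs {n k : ℕ} (v : Fin k → Fin n → ℤ)
    (huni : ∀ i : Fin k, IsUnimodular (fun α : {α : Fin k // α ≠ i} => v (α : Fin k)))
    (r : Fin k → ℚ) (hr0 : r ≠ 0) (hr : ∑ i, r i • castQ (v i) = 0) (i j : Fin k) :
    |r i| = |r j| := by
  have key : ∀ i j, |r i| ≤ |r j| := by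
    intro i j
    have hj : r j ≠ 0 := fun h => hr0 (aux_zero v (fun i => (huni i).1) r hr j h)
    obtain ⟨s, hs⟩ := aux_int v huni r hr hr0 i
    have h := hs j
    have hsj : s j ≠ 0 := by
      intro h0
      rw [h0] at h
      simp at h
      exact hj h
    have h1 : (1 : ℚ) ≤ |(s j : ℚ)| := by
      exact_mod_cast Int.one_le_abs hsj
    rw [h, abs_mul]
    exact le_mul_of_one_le_right (abs_nonneg _) h1
  exact le_antisymm (key i j) (key j i)

theorem stmt0 {n k : ℕ} (hk : 2 ≤ k) (v : Fin k → Fin n → ℤ)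
    (hdep : ¬ LinearIndependent ℚ (fun i => castQ (v i)))
    (hindep : ∀ i : Fin k,
      LinearIndependent ℚ (fun α : {α : Fin k // α ≠ i} => castQ (v α)))
    (huni : ∀ i : Fin k, IsUnimodular (fun α : {α : Fin k // α ≠ i} => v (α : Fin k))) :
    (∀ r : Fin k → ℚ, r ≠ 0 → ∑ i, r i • castQ (v i) = 0 →
      ∀ i j, |r i| = |r j|) ∧
    (∀ w : Fin k → ℚ,
      LinearIndependent ℚ (fun i => ((castQ (v i), w i) : (Fin n → ℚ) × ℚ)) →
      ∃ ε : Fin k → ℚ, (∀ i, ε i = 1 ∨ ε i = -1) ∧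
        (∑ i, ε i • castQ (v i)) = 0 ∧ 0 < ∑ i, ε i * w i ∧
        ∀ r : Fin k → ℚ, (∑ i, r i • castQ (v i)) = 0 → ∃ c : ℚ, r = c • ε) := by
  refine ⟨aux_abs v huni, fun w hw => ?_⟩
  have hdep' := hdep
  rw [Fintype.linearIndependent_iff] at hdep'
  push Not at hdep'
  obtain ⟨r, hr, i, hi⟩ := hdep'
  have hr0 : r ≠ 0 := fun h => hi (by rw [h]; rfl)
  have hwr : ∑ j, r j * w j ≠ 0 := by
    intro h
    refine hi (Fintype.linearIndependent_iff.1 hw r ?_ i)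
    ext1
    · simpa [Prod.fst_sum] using hr
    · simpa [Prod.snd_sum] using h
  have main : ∀ a : ℚ, |a| = |r i|⁻¹ → 0 < a * ∑ j, r j * w j →
      ∃ ε : Fin k → ℚ, (∀ i, ε i = 1 ∨ ε i = -1) ∧
        (∑ i, ε i • castQ (v i)) = 0 ∧ 0 < ∑ i, ε i * w i ∧
        ∀ r : Fin k → ℚ, (∑ i, r i • castQ (v i)) = 0 → ∃ c : ℚ, r = c • ε := by
    intro a ha hpos
    have hε : ∀ j, a * r j = 1 ∨ a * r j = -1 := by
      intro j
      apply eq_or_eq_neg_of_abs_eq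
      rw [abs_mul, ha, aux_abs v huni r hr0 hr j i]
      exact inv_mul_cancel₀ (abs_ne_zero.2 hi)
    have hrel : ∑ j, (a * r j) • castQ (v j) = 0 := by
      simp only [mul_smul, ← Finset.smul_sum, hr, smul_zero]
    refine ⟨fun j => a * r j, hε, hrel, ?_, ?_⟩
    · simpa only [mul_assoc, ← Finset.mul_sum] using hpos
    · intro q hq
      have hai : a * r i ≠ 0 := by
        rcases hε i with h | h <;> rw [h] <;> norm_num
      refine ⟨q i / (a * r i), ?_⟩
      have h0 := aux_zero v hindep (fun j => q j - q i / (a * r i) * (a * r j)) (by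
        simp only [sub_smul, mul_smul (q i / (a * r i)), Finset.sum_sub_distrib,
          ← Finset.smul_sum, hrel, hq]
        simp) i (by simp only [div_mul_cancel₀ _ hai, sub_self])
      funext j
      have := congrFun h0 j
      simp only [Pi.zero_apply] at this
      simp only [Pi.smul_apply, smul_eq_mul]
      linarith
  have hp : 0 < |r i|⁻¹ := inv_pos.2 (abs_pos.2 hi)
  rcases lt_or_gt_of_ne hwr with h | h
  · exact main (-|r i|⁻¹) (by rw [abs_neg, abs_of_pos hp])
      (mul_pos_of_neg_of_neg (neg_lt_zero.2 hp) h)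
  · exact main (|r i|⁻¹) (abs_of_pos hp) (mul_pos hp h)
end

section
/- Let n, k be natural numbers, let ρ i = (v i, w i) ∈ ℚ^n × ℚ for i ∈ Fin k be a ℚ-linearly independent family, and let r : Fin k → ℚ satisfy r i ≠ 0 for all i, ∑ i, r i • v i = 0 and ∑ i, (r i) * (w i) > 0. Let σ = cone({ρ i : i ∈ Fin k}). Fix an index j and let p = ∑_{α ≠ j} (c α) • (ρ α) where c α > 0 for all α ≠ j. Then: (a) if r j > 0, there exists ε₀ > 0 such that p + (0, ε) ∈ σ for all ε with 0 < ε ≤ ε₀, and p − (0, ε) ∉ σ for all ε > 0; (b) if r j < 0, there exists ε₀ > 0 such that p − (0, ε) ∈ σ for all ε with 0 < ε ≤ ε₀, and p + (0, ε) ∉ σ for all ε > 0. -/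
/-- The cone (set of all nonnegative rational linear combinations) generated by a set `S`
of vectors in a `ℚ`-vector space. -/
def qCone {V : Type*} [AddCommMonoid V] [Module ℚ V] (S : Set V) : Set V :=
  {x | ∃ (t : Finset V) (c : V → ℚ), ↑t ⊆ S ∧ (∀ y ∈ t, 0 ≤ c y) ∧ x = ∑ y ∈ t, c y • y}

theorem qCone_range_iff {V : Type*} [AddCommGroup V] [Module ℚ V] {k : ℕ} (ρ : Fin k → V)
    (hρ : LinearIndependent ℚ ρ) (x : V) :
    x ∈ qCone (Set.range ρ) ↔ ∃ a : Fin k → ℚ, (∀ i, 0 ≤ a i) ∧ x = ∑ i, a i • ρ i := by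
  classical
  have hinj := hρ.injective
  constructor
  · rintro ⟨t, c, ht, hc, rfl⟩
    refine ⟨fun i => if ρ i ∈ t then c (ρ i) else 0, fun i => ?_, ?_⟩
    · dsimp only
      split_ifs with h
      · exact hc _ h
      · exact le_rfl
    · have h1 : ∑ i, (if ρ i ∈ t then c (ρ i) else 0) • ρ i
          = ∑ y ∈ Finset.univ.image ρ, (if y ∈ t then c y else 0) • y := by
        rw [Finset.sum_image (fun a _ b _ h => hinj h)]
      rw [h1]
      have hsub : t ⊆ Finset.univ.image ρ := by
        intro y hy
        obtain ⟨i, rfl⟩ := ht hy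
        simp
      rw [← Finset.sum_subset hsub]
      · exact Finset.sum_congr rfl fun y hy => by rw [if_pos hy]
      · intro y _ hy
        rw [if_neg hy, zero_smul]
  · rintro ⟨a, ha, rfl⟩
    refine ⟨Finset.univ.image ρ, fun y => if h : ∃ i, ρ i = y then a h.choose else 0, ?_, ?_, ?_⟩
    · intro y hy
      simpa using hy
    · intro y _
      dsimp only
      split_ifs with h
      · exact ha _
      · exact le_rfl
    · rw [Finset.sum_image (fun a _ b _ h => hinj h)]
      refine Finset.sum_congr rfl fun i _ => ?_
      have h : ∃ i', ρ i' = ρ i := ⟨i, rfl⟩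
      beta_reduce
      rw [dif_pos h, hinj h.choose_spec]

theorem cone_aux {V : Type*} [AddCommGroup V] [Module ℚ V] {k : ℕ} (ρ : Fin k → V)
    (hρ : LinearIndependent ℚ ρ) (s : Fin k → ℚ) (j : Fin k) (c : Fin k → ℚ)
    (hc : ∀ α, α ≠ j → 0 < c α) (p : V) (hp : p = ∑ α ∈ Finset.univ.erase j, c α • ρ α) :
    (0 < s j → ∃ ε₀ : ℚ, 0 < ε₀ ∧ ∀ ε : ℚ, 0 < ε → ε ≤ ε₀ →
      p + ε • ∑ i, s i • ρ i ∈ qCone (Set.range ρ)) ∧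
    (s j < 0 → ∀ ε : ℚ, 0 < ε → p + ε • ∑ i, s i • ρ i ∉ qCone (Set.range ρ)) := by
  classical
  have hp' : ∀ ε : ℚ, p + ε • ∑ i, s i • ρ i
      = ∑ i, ((if i = j then 0 else c i) + ε * s i) • ρ i := by
    intro ε
    simp only [add_smul, Finset.sum_add_distrib, mul_smul, ← Finset.smul_sum]
    congr 1
    rw [hp, ← Finset.add_sum_erase _ _ (Finset.mem_univ j)]
    simp only [if_true, zero_smul, zero_add]
    exact Finset.sum_congr rfl fun i hi => by rw [if_neg (Finset.ne_of_mem_erase hi)]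
  constructor
  · intro hs
    have key : ∀ i, ∃ δ : ℚ, 0 < δ ∧ ∀ ε, 0 < ε → ε ≤ δ →
        0 ≤ (if i = j then 0 else c i) + ε * s i := by
      intro i
      by_cases h : i = j
      · subst h
        refine ⟨1, one_pos, fun ε h0 _ => ?_⟩
        simp only [if_true, zero_add]
        positivity
      · have hci := hc i h
        have hpos : 0 < |s i| + 1 := by positivity
        refine ⟨c i / (|s i| + 1), by positivity, fun ε h0 h1 => ?_⟩
        rw [if_neg h]
        rw [le_div_iff₀ hpos] at h1
        nlinarith [neg_abs_le (s i)]
    choose δ hδ hδ' using key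
    haveI : Nonempty (Fin k) := ⟨j⟩
    obtain ⟨m, hm⟩ := Finite.exists_min δ
    refine ⟨δ m, hδ m, fun ε h0 h1 => ?_⟩
    rw [qCone_range_iff ρ hρ]
    exact ⟨_, fun i => hδ' i ε h0 (h1.trans (hm i)), hp' ε⟩
  · intro hs ε h0 hmem
    rw [qCone_range_iff ρ hρ] at hmem
    obtain ⟨a, ha, hae⟩ := hmem
    rw [hp'] at hae
    have h2 := Fintype.linearIndependent_iff.1 hρ
      (fun i => ((if i = j then 0 else c i) + ε * s i) - a i)
      (by simp only [sub_smul, Finset.sum_sub_distrib]; rw [hae, sub_self]) j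
    simp only [if_true, zero_add] at h2
    nlinarith [ha j, mul_neg_of_pos_of_neg h0 hs]

theorem stmt1 {n k : ℕ} (v : Fin k → Fin n → ℚ) (w : Fin k → ℚ)
    (hindep : LinearIndependent ℚ (fun i => ((v i, w i) : (Fin n → ℚ) × ℚ)))
    (r : Fin k → ℚ) (hr0 : ∀ i, r i ≠ 0)
    (hrel : ∑ i, r i • v i = 0) (hw : 0 < ∑ i, r i * w i)
    (j : Fin k) (c : Fin k → ℚ) (hc : ∀ α, α ≠ j → 0 < c α)
    (p : (Fin n → ℚ) × ℚ)
    (hp : p = ∑ α ∈ Finset.univ.erase j, c α • ((v α, w α) : (Fin n → ℚ) × ℚ)) :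
    (0 < r j →
      (∃ ε₀ : ℚ, 0 < ε₀ ∧ ∀ ε : ℚ, 0 < ε → ε ≤ ε₀ →
        p + ((0 : Fin n → ℚ), ε) ∈
          qCone (Set.range fun i => ((v i, w i) : (Fin n → ℚ) × ℚ))) ∧
      (∀ ε : ℚ, 0 < ε →
        p - ((0 : Fin n → ℚ), ε) ∉
          qCone (Set.range fun i => ((v i, w i) : (Fin n → ℚ) × ℚ)))) ∧
    (r j < 0 →
      (∃ ε₀ : ℚ, 0 < ε₀ ∧ ∀ ε : ℚ, 0 < ε → ε ≤ ε₀ →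
        p - ((0 : Fin n → ℚ), ε) ∈
          qCone (Set.range fun i => ((v i, w i) : (Fin n → ℚ) × ℚ))) ∧
      (∀ ε : ℚ, 0 < ε →
        p + ((0 : Fin n → ℚ), ε) ∉
          qCone (Set.range fun i => ((v i, w i) : (Fin n → ℚ) × ℚ)))) := by
  have hW := hw.ne'
  have e1 : ∀ ε : ℚ, ((0 : Fin n → ℚ), ε) =
      ε • ∑ i, (r i / ∑ i, r i * w i) • ((v i, w i) : (Fin n → ℚ) × ℚ) := by
    intro ε
    have h0 : ∑ i, r i • ((v i, w i) : (Fin n → ℚ) × ℚ) = (0, ∑ i, r i * w i) := by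
      ext1
      · simpa [Prod.fst_sum] using hrel
      · simp [Prod.snd_sum]
    simp only [div_eq_inv_mul, mul_smul, ← Finset.smul_sum]
    rw [h0]
    ext1
    · simp
    · simp [hW]
  have e2 : ∀ ε : ℚ, -((0 : Fin n → ℚ), ε) =
      ε • ∑ i, (-(r i / ∑ i, r i * w i)) • ((v i, w i) : (Fin n → ℚ) × ℚ) := by
    intro ε
    rw [e1 ε]
    simp only [neg_smul, Finset.sum_neg_distrib, smul_neg]
  have A := cone_aux _ hindep (fun i => r i / ∑ i, r i * w i) j c hc p hp
  have B := cone_aux _ hindep (fun i => -(r i / ∑ i, r i * w i)) j c hc p hp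
  simp only [← e1] at A
  simp only [← e2, ← sub_eq_add_neg] at B
  refine ⟨fun h => ⟨A.1 (div_pos h hw), B.2 (neg_neg_of_pos (div_pos h hw))⟩,
    fun h => ⟨B.1 (neg_pos.2 (div_neg_of_neg_of_pos h hw)), A.2 (div_neg_of_neg_of_pos h hw)⟩⟩
end

section
/- Let n, k be natural numbers with k ≥ 2, let v : Fin k → ℚ^n, and let I₊ and I₋ be nonempty disjoint subsets of Fin k with I₊ ∪ I₋ = Fin k. Assume ∑_{i ∈ I₊} v i = ∑_{j ∈ I₋} v j, and write v₀ for this common value. Then the following four subsets of ℚ^n coincide: (1) cone({v i : i ∈ Fin k}); (2) ⋃_{i ∈ I₊} cone({v α : α ≠ i}); (3) ⋃_{j ∈ I₋} cone({v α : α ≠ j}); (4) ⋃_{i ∈ I₊} ⋃_{j ∈ I₋} cone({v₀} ∪ {v α : α ∉ {i, j}}). -/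
section aux
variable {V : Type*} [AddCommMonoid V] [Module ℚ V]

theorem qCone_zero (S : Set V) : (0 : V) ∈ qCone S :=
  ⟨∅, 0, by simp, by simp, by simp⟩

theorem qCone_add {S : Set V} {x y : V} (hx : x ∈ qCone S) (hy : y ∈ qCone S) :
    x + y ∈ qCone S := by
  classical
  obtain ⟨t, c, ht, hc, rfl⟩ := hx
  obtain ⟨u, d, hu, hd, rfl⟩ := hy
  refine ⟨t ∪ u, fun z => (if z ∈ t then c z else 0) + (if z ∈ u then d z else 0), ?_, ?_, ?_⟩
  · rw [Finset.coe_union]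
    exact Set.union_subset ht hu
  · intro z _
    apply add_nonneg
    · split_ifs with h
      · exact hc z h
      · exact le_rfl
    · split_ifs with h
      · exact hd z h
      · exact le_rfl
  · simp only [add_smul, Finset.sum_add_distrib, ite_smul, zero_smul, ← Finset.sum_filter]
    congr 1
    · apply Finset.sum_congr _ (fun _ _ => rfl)
      ext z; simp
    · apply Finset.sum_congr _ (fun _ _ => rfl)
      ext z; simp

theorem qCone_smul {S : Set V} {x : V} {a : ℚ} (ha : 0 ≤ a) (hx : x ∈ qCone S) :
    a • x ∈ qCone S := by
  obtain ⟨t, c, ht, hc, rfl⟩ := hx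
  refine ⟨t, fun z => a * c z, ht, fun z hz => mul_nonneg ha (hc z hz), ?_⟩
  simp only [Finset.smul_sum, mul_smul]

theorem qCone_mem {S : Set V} {x : V} (hx : x ∈ S) : x ∈ qCone S :=
  ⟨{x}, fun _ => 1, by simpa using hx, by simp, by simp⟩

theorem qCone_sum {ι : Type*} {S : Set V} (s : Finset ι) (f : ι → V)
    (h : ∀ i ∈ s, f i ∈ qCone S) : ∑ i ∈ s, f i ∈ qCone S :=
  Finset.sum_induction f (· ∈ qCone S) (fun _ _ => qCone_add) (qCone_zero S) h

theorem qCone_le {S T : Set V} (h : S ⊆ qCone T) : qCone S ⊆ qCone T := by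
  rintro x ⟨t, c, ht, hc, rfl⟩
  exact qCone_sum _ _ fun y hy => qCone_smul (hc y hy) (h (ht hy))

theorem qCone_range {ι : Type*} [Fintype ι] {v : ι → V} {x : V} (hx : x ∈ qCone (Set.range v)) :
    ∃ c : ι → ℚ, (∀ i, 0 ≤ c i) ∧ x = ∑ i, c i • v i := by
  classical
  obtain ⟨t, c, ht, hc, rfl⟩ := hx
  refine Finset.sum_induction (fun y => c y • y)
    (fun x => ∃ c : ι → ℚ, (∀ i, 0 ≤ c i) ∧ x = ∑ i, c i • v i) ?_ ?_ ?_
  · rintro _ _ ⟨a, ha, rfl⟩ ⟨b, hb, rfl⟩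
    exact ⟨a + b, fun i => add_nonneg (ha i) (hb i), by
      simp [add_smul, Finset.sum_add_distrib]⟩
  · exact ⟨0, by simp, by simp⟩
  · intro y hy
    obtain ⟨i, rfl⟩ := ht hy
    refine ⟨Pi.single i (c (v i)), fun j => ?_, ?_⟩
    · by_cases h : j = i
      · subst h; simpa using hc _ hy
      · simp [h]
    · rw [Finset.sum_eq_single i]
      · simp
      · intro j _ h; simp [h]
      · simp

end aux

theorem stmt2 {n k : ℕ} (hk : 2 ≤ k) (v : Fin k → Fin n → ℚ)
    (Ip Im : Finset (Fin k)) (hIp : Ip.Nonempty) (hIm : Im.Nonempty)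
    (hdisj : Disjoint Ip Im) (hunion : Ip ∪ Im = Finset.univ)
    (hrel : ∑ i ∈ Ip, v i = ∑ j ∈ Im, v j) :
    qCone (Set.range v) = (⋃ i ∈ (Ip : Set (Fin k)), qCone (v '' {α | α ≠ i})) ∧
    (⋃ i ∈ (Ip : Set (Fin k)), qCone (v '' {α | α ≠ i})) =
      (⋃ j ∈ (Im : Set (Fin k)), qCone (v '' {α | α ≠ j})) ∧
    (⋃ j ∈ (Im : Set (Fin k)), qCone (v '' {α | α ≠ j})) =
      (⋃ i ∈ (Ip : Set (Fin k)), ⋃ j ∈ (Im : Set (Fin k)),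
        qCone (insert (∑ a ∈ Ip, v a) (v '' {α | α ≠ i ∧ α ≠ j}))) := by
  have h41 : qCone (Set.range v) ⊆ (⋃ i ∈ (Ip : Set (Fin k)), ⋃ j ∈ (Im : Set (Fin k)),
        qCone (insert (∑ a ∈ Ip, v a) (v '' {α | α ≠ i ∧ α ≠ j}))) := by
    intro x hx
    obtain ⟨c, hc, rfl⟩ := qCone_range hx
    obtain ⟨i, hi, hmi⟩ := Ip.exists_min_image c hIp
    obtain ⟨j, hj, hmj⟩ := Im.exists_min_image c hIm
    simp only [Set.mem_iUnion]
    refine ⟨i, hi, j, hj, ?_⟩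
    have key : ∑ a, c a • v a = (c i + c j) • (∑ a ∈ Ip, v a)
        + (∑ a ∈ Ip, (c a - c i) • v a + ∑ a ∈ Im, (c a - c j) • v a) := by
      rw [← hunion, Finset.sum_union hdisj, add_smul]
      nth_rewrite 2 [hrel]
      simp only [sub_smul, Finset.sum_sub_distrib, Finset.smul_sum]
      abel
    rw [key]
    refine qCone_add (qCone_smul (add_nonneg (hc i) (hc j)) (qCone_mem (Set.mem_insert _ _)))
      (qCone_add (qCone_sum _ _ fun a ha => ?_) (qCone_sum _ _ fun a ha => ?_))
    · by_cases h : a = i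
      · subst h; simpa using qCone_zero _
      · exact qCone_smul (sub_nonneg.2 (hmi a ha)) (qCone_mem (Set.mem_insert_of_mem _
          ⟨a, ⟨h, fun e => Finset.disjoint_left.1 hdisj ha (e ▸ hj)⟩, rfl⟩))
    · by_cases h : a = j
      · subst h; simpa using qCone_zero _
      · exact qCone_smul (sub_nonneg.2 (hmj a ha)) (qCone_mem (Set.mem_insert_of_mem _
          ⟨a, ⟨fun e => Finset.disjoint_left.1 hdisj hi (e ▸ ha), h⟩, rfl⟩))
  have h42 : (⋃ i ∈ (Ip : Set (Fin k)), ⋃ j ∈ (Im : Set (Fin k)),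
        qCone (insert (∑ a ∈ Ip, v a) (v '' {α | α ≠ i ∧ α ≠ j}))) ⊆
      (⋃ i ∈ (Ip : Set (Fin k)), qCone (v '' {α | α ≠ i})) := by
    refine Set.iUnion₂_mono fun i hi => Set.iUnion₂_subset fun j hj => qCone_le ?_
    refine Set.insert_subset ?_ ?_
    · rw [hrel]
      exact qCone_sum _ _ fun a ha => qCone_mem
        ⟨a, fun e => Finset.disjoint_left.1 hdisj hi (e ▸ ha), rfl⟩
    · rintro _ ⟨a, ha, rfl⟩
      exact qCone_mem ⟨a, ha.1, rfl⟩
  have h43 : (⋃ i ∈ (Ip : Set (Fin k)), ⋃ j ∈ (Im : Set (Fin k)),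
        qCone (insert (∑ a ∈ Ip, v a) (v '' {α | α ≠ i ∧ α ≠ j}))) ⊆
      (⋃ j ∈ (Im : Set (Fin k)), qCone (v '' {α | α ≠ j})) := by
    refine Set.iUnion₂_subset fun i hi => Set.iUnion₂_mono fun j hj => qCone_le ?_
    refine Set.insert_subset ?_ ?_
    · exact qCone_sum _ _ fun a ha => qCone_mem
        ⟨a, fun e => Finset.disjoint_left.1 hdisj ha (e ▸ hj), rfl⟩
    · rintro _ ⟨a, ha, rfl⟩
      exact qCone_mem ⟨a, ha.2, rfl⟩
  have h1 : ∀ I : Finset (Fin k), (⋃ i ∈ (I : Set (Fin k)), qCone (v '' {α | α ≠ i})) ⊆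
      qCone (Set.range v) := fun I => Set.iUnion₂_subset fun i _ =>
    qCone_le fun y hy => qCone_mem (Set.image_subset_range _ _ hy)
  have e2 := (h41.trans h42).antisymm (h1 Ip)
  have e3 := (h41.trans h43).antisymm (h1 Im)
  exact ⟨e2, e2.symm.trans e3, (((h1 Im).trans h41).antisymm h43)⟩
end

section
/- Let n, k be natural numbers with k ≥ 2, let v : Fin k → ℤ^n, and let I₊ and I₋ be nonempty disjoint subsets of Fin k with I₊ ∪ I₋ = Fin k. Assume ∑_{i ∈ I₊} v i = ∑_{j ∈ I₋} v j, write v₀ for this common value, and assume that for every index i ∈ Fin k the subfamily (v α)_{α ≠ i} is unimodular. Then for every i ∈ I₊ and every j ∈ I₋, the family consisting of v₀ together with the vectors v α for α ∉ {i, j} is ℚ-linearly independent and unimodular, and the subgroup of ℤ^n it generates equals the subgroup generated by (v α)_{α ≠ i}. -/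
theorem span_aux {R M : Type*} [Ring R] [AddCommGroup M] [Module R M] {k : ℕ}
    (w : Fin k → M) (w0 : M) (Im : Finset (Fin k)) (h0 : w0 = ∑ a ∈ Im, w a)
    (i j : Fin k) (hi : i ∉ Im) (hj : j ∈ Im) (f : Option {α : Fin k // α ≠ i ∧ α ≠ j} → M)
    (hf0 : f none = w0) (hf : ∀ α, f (some α) = w α) :
    Submodule.span R (Set.range f) =
      Submodule.span R (Set.range (fun α : {α : Fin k // α ≠ i} => w (α : Fin k))) := by
  apply le_antisymm
  · rw [Submodule.span_le]
    rintro _ ⟨o, rfl⟩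
    rcases o with _ | ⟨a, ha⟩
    · rw [hf0, h0]
      refine Submodule.sum_mem _ fun a ha => ?_
      exact Submodule.subset_span ⟨⟨a, fun h => hi (h ▸ ha)⟩, rfl⟩
    · rw [hf]
      exact Submodule.subset_span ⟨⟨a, ha.1⟩, rfl⟩
  · rw [Submodule.span_le]
    rintro _ ⟨⟨a, ha⟩, rfl⟩
    by_cases haj : a = j
    · subst haj
      have h1 : w a = f none - ∑ b ∈ Im.erase a, w b := by
        rw [hf0, h0, ← Finset.add_sum_erase _ _ hj]; simp
      change w a ∈ _
      rw [h1]
      refine Submodule.sub_mem _ (Submodule.subset_span ⟨none, rfl⟩) ?_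
      refine Submodule.sum_mem _ fun b hb => ?_
      rw [Finset.mem_erase] at hb
      exact Submodule.subset_span ⟨some ⟨b, fun h => hi (h ▸ hb.2), hb.1⟩, hf _⟩
    · exact Submodule.subset_span ⟨some ⟨a, ha, haj⟩, hf _⟩

theorem card_aux {k : ℕ} (i j : Fin k) (hij : i ≠ j) :
    Fintype.card (Option {α : Fin k // α ≠ i ∧ α ≠ j}) = Fintype.card {α : Fin k // α ≠ i} := by
  rw [Fintype.card_option, Fintype.card_subtype, Fintype.card_subtype]
  have h : (Finset.univ.filter fun α : Fin k => α ≠ i ∧ α ≠ j) =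
      (Finset.univ.filter fun α : Fin k => α ≠ i).erase j := by
    ext a; simp [and_comm]
  rw [h]
  exact Finset.card_erase_add_one (by simpa using hij.symm)

theorem castQ_sum_s3 {n k : ℕ} (s : Finset (Fin k)) (v : Fin k → Fin n → ℤ) :
    castQ (∑ a ∈ s, v a) = ∑ a ∈ s, castQ (v a) := by
  ext x; simp [castQ, Finset.sum_apply]

theorem stmt3 {n k : ℕ} (hk : 2 ≤ k) (v : Fin k → Fin n → ℤ)
    (Ip Im : Finset (Fin k)) (hIp : Ip.Nonempty) (hIm : Im.Nonempty)
    (hdisj : Disjoint Ip Im) (hunion : Ip ∪ Im = Finset.univ)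
    (hrel : ∑ i ∈ Ip, v i = ∑ j ∈ Im, v j)
    (huni : ∀ i : Fin k, IsUnimodular (fun α : {α : Fin k // α ≠ i} => v (α : Fin k))) :
    ∀ i ∈ Ip, ∀ j ∈ Im,
      LinearIndependent ℚ (fun o : Option {α : Fin k // α ≠ i ∧ α ≠ j} =>
        castQ (o.elim (∑ a ∈ Ip, v a) (fun α => v (α : Fin k)))) ∧
      IsUnimodular (fun o : Option {α : Fin k // α ≠ i ∧ α ≠ j} =>
        o.elim (∑ a ∈ Ip, v a) (fun α => v (α : Fin k))) ∧
      Submodule.span ℤ (Set.range (fun o : Option {α : Fin k // α ≠ i ∧ α ≠ j} =>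
        o.elim (∑ a ∈ Ip, v a) (fun α => v (α : Fin k)))) =
      Submodule.span ℤ (Set.range (fun α : {α : Fin k // α ≠ i} => v (α : Fin k))) := by
  intro i hi j hj
  have hiIm : i ∉ Im := Finset.disjoint_left.mp hdisj hi
  have hij : i ≠ j := fun h => hiIm (h ▸ hj)
  have hZ := span_aux (R := ℤ) v _ Im hrel i j hiIm hj
    (fun o : Option {α : Fin k // α ≠ i ∧ α ≠ j} =>
        o.elim (∑ a ∈ Ip, v a) (fun α => v (α : Fin k))) rfl (fun _ => rfl)
  have hQ := span_aux (R := ℚ) (fun a => castQ (v a)) (castQ (∑ a ∈ Ip, v a)) Im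
    (by rw [hrel, castQ_sum_s3]) i j hiIm hj
    (fun o : Option {α : Fin k // α ≠ i ∧ α ≠ j} =>
        castQ (o.elim (∑ a ∈ Ip, v a) (fun α => v (α : Fin k)))) rfl (fun _ => rfl)
  obtain ⟨hl, hs⟩ := huni i
  have hli : LinearIndependent ℚ (fun o : Option {α : Fin k // α ≠ i ∧ α ≠ j} =>
        castQ (o.elim (∑ a ∈ Ip, v a) (fun α => v (α : Fin k)))) := by
    rw [linearIndependent_iff_card_eq_finrank_span] at hl ⊢
    rw [card_aux i j hij, hl, Set.finrank, Set.finrank, hQ]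
  refine ⟨hli, ⟨hli, fun z => ?_⟩, hZ⟩
  rw [hZ, hQ]
  exact hs z
end

section
/- Let n, k be natural numbers, let v : Fin k → ℚ^n and r : Fin k → ℚ satisfy ∑ i, r i • v i = 0, with r i ≠ 0 and −1 ≤ r i ≤ 1 for every i, and assume both {i : r i < 0} and {i : r i > 0} are nonempty. Then there exists c : Fin k → ℚ with c i > 0 for all i such that ∑_{i : r i < 0} v i = ∑ i, c i • v i, and there exists c' : Fin k → ℚ with c' i > 0 for all i such that ∑_{i : r i > 0} v i = ∑ i, c' i • v i. -/
theorem stmt4 {n k : ℕ} (v : Fin k → Fin n → ℚ) (r : Fin k → ℚ)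
    (hrel : ∑ i, r i • v i = 0) (h0 : ∀ i, r i ≠ 0)
    (hb : ∀ i, -1 ≤ r i ∧ r i ≤ 1)
    (hneg : ∃ i, r i < 0) (hpos : ∃ i, 0 < r i) :
    (∃ c : Fin k → ℚ, (∀ i, 0 < c i) ∧
      ∑ i ∈ Finset.univ.filter (fun i => r i < 0), v i = ∑ i, c i • v i) ∧
    (∃ c' : Fin k → ℚ, (∀ i, 0 < c' i) ∧
      ∑ i ∈ Finset.univ.filter (fun i => 0 < r i), v i = ∑ i, c' i • v i) := by
  constructor
  · refine ⟨fun i => (if r i < 0 then 1 else 0) + (1/2) * r i, fun i => ?_, ?_⟩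
    · have := hb i
      rcases lt_or_gt_of_ne (h0 i) with h | h
      · simp only [h, if_true]; linarith
      · simp only [not_lt.mpr h.le, if_false]; linarith
    · simp only [add_smul, mul_smul, Finset.sum_add_distrib, ← Finset.smul_sum, hrel,
        smul_zero, add_zero, ite_smul, one_smul, zero_smul, Finset.sum_filter]
  · refine ⟨fun i => (if 0 < r i then 1 else 0) + (-1/2) * r i, fun i => ?_, ?_⟩
    · have := hb i
      rcases lt_or_gt_of_ne (h0 i) with h | h
      · simp only [not_lt.mpr h.le, if_false]; linarith
      · have h' : 0 < r i := h
        simp only [h', if_true]; linarith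
    · simp only [add_smul, mul_smul, Finset.sum_add_distrib, ← Finset.smul_sum, hrel,
        smul_zero, add_zero, ite_smul, one_smul, zero_smul, Finset.sum_filter]
end

section
/- Let m ≥ 2 and let v : Fin m → ℚ^{m−1}. Suppose r : Fin m → ℚ satisfies ∑ i, r i • v i = 0. For each index i let D i = |det M_i| and let h = max over i of D i. Fix indices j ≠ k with (r j) * (r k) ≥ 0 and not both r j = 0 and r k = 0. Let a : Fin m → ℚ with 0 ≤ a i ≤ 1 for all i, and set q = ∑ i, a i • v i. Then |det M(q; j, k)| ≤ max (a j) (a k) * h. Moreover, if in addition a j < 1, a k < 1 and h > 0, then |det M(q; j, k)| < h. -/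
/-- `Mdel v i` is the `(m-1) × (m-1)` matrix whose columns are the vectors `v α` for
`α ≠ i`, taken in increasing order of index. -/
def Mdel {m : ℕ} (v : Fin m → Fin (m - 1) → ℚ) (i : Fin m) :
    Matrix (Fin (m - 1)) (Fin (m - 1)) ℚ :=
  Matrix.of fun r c =>
    v ((({i}ᶜ : Finset (Fin m)).orderIsoOfFin
      (by simp [Finset.card_compl]) c : Fin m)) r

/-- `Mjk v q j k _` is the `(m-1) × (m-1)` matrix whose first column is `q` and whose
remaining columns are the vectors `v α` for `α ∉ {j, k}`, in increasing order of index. -/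
def Mjk {m : ℕ} (v : Fin m → Fin (m - 1) → ℚ) (q : Fin (m - 1) → ℚ)
    (j k : Fin m) (hjk : j ≠ k) :
    Matrix (Fin (m - 1)) (Fin (m - 1)) ℚ :=
  Matrix.of fun r c =>
    if h0 : (c : ℕ) = 0 then q r
    else
      v ((({j, k}ᶜ : Finset (Fin m)).orderIsoOfFin
        (by
          rw [Finset.card_compl, Finset.card_insert_of_notMem (by simpa using hjk),
            Finset.card_singleton, Fintype.card_fin])
        (⟨(c : ℕ) - 1, by have := c.isLt; omega⟩ : Fin (m - 2)) : Fin m)) r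

/-- Column index function of `Mjk`. -/
def colIdx {m : ℕ} (x j k : Fin m) (hjk : j ≠ k) (c : Fin (m - 1)) : Fin m :=
  if h0 : (c : ℕ) = 0 then x
    else
      ((({j, k}ᶜ : Finset (Fin m)).orderIsoOfFin
        (by
          rw [Finset.card_compl, Finset.card_insert_of_notMem (by simpa using hjk),
            Finset.card_singleton, Fintype.card_fin])
        (⟨(c : ℕ) - 1, by have := c.isLt; omega⟩ : Fin (m - 2)) : Fin m))

theorem Mjk_apply_idx {m : ℕ} (v : Fin m → Fin (m - 1) → ℚ) (x j k : Fin m) (hjk : j ≠ k)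
    (p c : Fin (m - 1)) : Mjk v (v x) j k hjk p c = v (colIdx x j k hjk c) p := by
  unfold Mjk colIdx
  by_cases h0 : (c : ℕ) = 0 <;> simp [h0]

theorem colIdx_mem {m : ℕ} (x j k : Fin m) (hjk : j ≠ k) (c : Fin (m - 1)) (h0 : (c : ℕ) ≠ 0) :
    colIdx x j k hjk c ≠ j ∧ colIdx x j k hjk c ≠ k := by
  unfold colIdx
  rw [dif_neg h0]
  have := Finset.coe_mem ((({j, k}ᶜ : Finset (Fin m)).orderIsoOfFin
        (by
          rw [Finset.card_compl, Finset.card_insert_of_notMem (by simpa using hjk),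
            Finset.card_singleton, Fintype.card_fin])
        (⟨(c : ℕ) - 1, by have := c.isLt; omega⟩ : Fin (m - 2))))
  simpa only [Finset.mem_compl, Finset.mem_insert, Finset.mem_singleton, not_or] using this

theorem colIdx_inj {m : ℕ} (x j k : Fin m) (hjk : j ≠ k) (hx : x = j ∨ x = k) :
    Function.Injective (colIdx x j k hjk) := by
  intro c d hcd
  by_cases hc : (c : ℕ) = 0
  · by_cases hd : (d : ℕ) = 0
    · exact Fin.ext (hc.trans hd.symm)
    · have h1 := colIdx_mem x j k hjk d hd
      rw [← hcd] at h1
      have h2 : colIdx x j k hjk c = x := by simp [colIdx, hc]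
      rw [h2] at h1
      tauto
  · by_cases hd : (d : ℕ) = 0
    · have h1 := colIdx_mem x j k hjk c hc
      rw [hcd] at h1
      have h2 : colIdx x j k hjk d = x := by simp [colIdx, hd]
      rw [h2] at h1
      tauto
    · unfold colIdx at hcd
      rw [dif_neg hc, dif_neg hd] at hcd
      have h3 := (OrderIso.injective _) (Subtype.ext hcd)
      rw [Fin.mk.injEq] at h3
      apply Fin.ext
      omega

theorem colIdx_surj {m : ℕ} (x j k : Fin m) (hjk : j ≠ k) (y : Fin m) (hj : y ≠ j) (hk : y ≠ k) :
    ∃ c : Fin (m - 1), (c : ℕ) ≠ 0 ∧ colIdx x j k hjk c = y := by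
  have hcard : ({j, k}ᶜ : Finset (Fin m)).card = m - 2 := by
    rw [Finset.card_compl, Finset.card_insert_of_notMem (by simpa using hjk),
            Finset.card_singleton, Fintype.card_fin]
  obtain ⟨d, hd⟩ := (({j, k}ᶜ : Finset (Fin m)).orderIsoOfFin hcard).surjective
    ⟨y, by simp [hj, hk]⟩
  refine ⟨⟨d + 1, by have := d.isLt; omega⟩, by simp, ?_⟩
  simp [colIdx, hd]

theorem abs_det_Mjk {m : ℕ} (v : Fin m → Fin (m - 1) → ℚ) (x i j k : Fin m) (hjk : j ≠ k)
    (hx : x = j ∧ i = k ∨ x = k ∧ i = j) :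
    |(Mjk v (v x) j k hjk).det| = |(Mdel v i).det| := by
  have hcard : ({i}ᶜ : Finset (Fin m)).card = m - 1 := by simp [Finset.card_compl]
  have hne : ∀ c, colIdx x j k hjk c ≠ i := by
    intro c
    by_cases hc : (c : ℕ) = 0
    · have h2 : colIdx x j k hjk c = x := by simp [colIdx, hc]
      rw [h2]
      rcases hx with ⟨rfl, rfl⟩ | ⟨rfl, rfl⟩
      · exact hjk
      · exact hjk.symm
    · have := colIdx_mem x j k hjk c hc
      rcases hx with ⟨rfl, rfl⟩ | ⟨rfl, rfl⟩
      · exact this.2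
      · exact this.1
  let s : Fin (m - 1) → Fin (m - 1) := fun c =>
    (({i}ᶜ : Finset (Fin m)).orderIsoOfFin hcard).symm ⟨colIdx x j k hjk c, by simp [hne c]⟩
  have hs : Function.Injective s := by
    intro c d hcd
    have h3 := (OrderIso.injective _) hcd
    exact colIdx_inj x j k hjk (by tauto) (congrArg Subtype.val h3)
  let e : Equiv.Perm (Fin (m - 1)) := Equiv.ofBijective s (Finite.injective_iff_bijective.mp hs)
  have hM : Mjk v (v x) j k hjk = (Mdel v i).submatrix (Equiv.refl _) e := by
    ext p c
    rw [Mjk_apply_idx]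
    have h4 : (({i}ᶜ : Finset (Fin m)).orderIsoOfFin hcard (s c) : Fin m)
        = colIdx x j k hjk c := by
      simp only [s, OrderIso.apply_symm_apply]
    rw [← h4]
    rfl
  rw [hM, Matrix.abs_det_submatrix_equiv_equiv]

theorem det_Mjk_zero {m : ℕ} (hm : 2 ≤ m) (v : Fin m → Fin (m - 1) → ℚ) (y j k : Fin m)
    (hjk : j ≠ k) (hj : y ≠ j) (hk : y ≠ k) : (Mjk v (v y) j k hjk).det = 0 := by
  obtain ⟨c, hc, hcy⟩ := colIdx_surj y j k hjk y hj hk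
  refine Matrix.det_zero_of_column_eq (i := c) (j := ⟨0, by omega⟩)
    (by intro h; apply hc; rw [h]) ?_
  intro p
  rw [Mjk_apply_idx, Mjk_apply_idx, hcy]
  simp [colIdx]

theorem det_Mjk_sum {m : ℕ} (hm : 2 ≤ m) (v : Fin m → Fin (m - 1) → ℚ) (b : Fin m → ℚ)
    (j k : Fin m) (hjk : j ≠ k) : (Mjk v (∑ i, b i • v i) j k hjk).det =
      b j * (Mjk v (v j) j k hjk).det + b k * (Mjk v (v k) j k hjk).det := by
  let z : Fin (m - 1) := ⟨0, by omega⟩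
  have key : ∀ q, (Mjk v q j k hjk).det = Matrix.cramer (Mjk v 0 j k hjk) q z := by
    intro q
    rw [Matrix.cramer_apply]
    congr 1
    ext p c
    by_cases hc : c = z
    · subst hc
      simp [Mjk, z]
    · have hc' : (c : ℕ) ≠ 0 := fun h => hc (Fin.ext h)
      simp [Matrix.updateCol_apply, hc, Mjk, hc']
  have h1 : (Mjk v (∑ i, b i • v i) j k hjk).det = ∑ i, b i * (Mjk v (v i) j k hjk).det := by
    simp only [key, map_sum, map_smul, Finset.sum_apply, Pi.smul_apply, smul_eq_mul]
  rw [h1, ← Finset.sum_subset (Finset.subset_univ {j, k}), Finset.sum_pair hjk]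
  intro y _ hy
  simp only [Finset.mem_insert, Finset.mem_singleton, not_or] at hy
  rw [det_Mjk_zero hm v y j k hjk hy.1 hy.2, mul_zero]

theorem arith_aux (s t x y a b h : ℚ) (hst : 0 ≤ s * t) (hnz : ¬ (s = 0 ∧ t = 0))
    (hr : s * x + t * y = 0) (hx : |x| ≤ h) (hy : |y| ≤ h) (ha : 0 ≤ a) (hb : 0 ≤ b) :
    |a * x + b * y| ≤ max a b * h := by
  have hxy : x * y ≤ 0 := by
    by_contra! hpos
    have e1 : s * t * (x * y) + t ^ 2 * y ^ 2 = 0 := by linear_combination t * y * hr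
    have e2 : s * t * (x * y) + s ^ 2 * x ^ 2 = 0 := by linear_combination s * x * hr
    have p := mul_nonneg hst hpos.le
    have hx0 : x ≠ 0 := by rintro rfl; simp at hpos
    have hy0 : y ≠ 0 := by rintro rfl; simp at hpos
    apply hnz
    constructor
    · have : (s * x) ^ 2 = 0 := le_antisymm (by nlinarith) (sq_nonneg _)
      simpa [hx0] using this
    · have : (t * y) ^ 2 = 0 := le_antisymm (by nlinarith) (sq_nonneg _)
      simpa [hy0] using this
  have h0 : 0 ≤ h := (abs_nonneg x).trans hx
  have hA : a * h ≤ max a b * h := mul_le_mul_of_nonneg_right (le_max_left _ _) h0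
  have hB : b * h ≤ max a b * h := mul_le_mul_of_nonneg_right (le_max_right _ _) h0
  rw [abs_le] at hx hy ⊢
  have a1 := mul_le_mul_of_nonneg_left hx.1 ha
  have a2 := mul_le_mul_of_nonneg_left hx.2 ha
  have b1 := mul_le_mul_of_nonneg_left hy.1 hb
  have b2 := mul_le_mul_of_nonneg_left hy.2 hb
  rcases mul_nonpos_iff.mp hxy with ⟨u, w⟩ | ⟨u, w⟩
  · have c1 := mul_nonneg ha u
    have c2 := mul_nonpos_of_nonneg_of_nonpos hb w
    constructor <;> linarith
  · have c1 := mul_nonneg hb w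
    have c2 := mul_nonpos_of_nonneg_of_nonpos ha u
    constructor <;> linarith

theorem stmt5 {m : ℕ} (hm : 2 ≤ m) (v : Fin m → Fin (m - 1) → ℚ)
    (r : Fin m → ℚ) (hrel : ∑ i, r i • v i = 0)
    (h : ℚ)
    (hh : h = Finset.univ.sup' ⟨⟨0, by omega⟩, Finset.mem_univ _⟩
      (fun i => |(Mdel v i).det|))
    (j k : Fin m) (hjk : j ≠ k) (hsign : 0 ≤ r j * r k) (hnz : ¬ (r j = 0 ∧ r k = 0))
    (a : Fin m → ℚ) (ha : ∀ i, 0 ≤ a i ∧ a i ≤ 1)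
    (q : Fin (m - 1) → ℚ) (hq : q = ∑ i, a i • v i) :
    |(Mjk v q j k hjk).det| ≤ max (a j) (a k) * h ∧
    (a j < 1 → a k < 1 → 0 < h → |(Mjk v q j k hjk).det| < h) := by
  have hle : ∀ i, |(Mdel v i).det| ≤ h := by
    intro i
    rw [hh]
    exact Finset.le_sup' (fun i => |(Mdel v i).det|) (Finset.mem_univ i)
  have hr := det_Mjk_sum hm v r j k hjk
  rw [hrel] at hr
  have hz : (Mjk v 0 j k hjk).det = 0 := by
    apply Matrix.det_eq_zero_of_column_eq_zero ⟨0, by omega⟩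
    intro p
    simp [Mjk]
  rw [hz] at hr
  have main : |(Mjk v q j k hjk).det| ≤ max (a j) (a k) * h := by
    rw [hq, det_Mjk_sum hm v a j k hjk]
    refine arith_aux (r j) (r k) _ _ _ _ h hsign hnz hr.symm ?_ ?_ (ha j).1 (ha k).1
    · rw [abs_det_Mjk v j k j k hjk (Or.inl ⟨rfl, rfl⟩)]
      exact hle k
    · rw [abs_det_Mjk v k j j k hjk (Or.inr ⟨rfl, rfl⟩)]
      exact hle j
  refine ⟨main, fun h1 h2 h3 => lt_of_le_of_lt main ?_⟩
  have := mul_lt_mul_of_pos_right (max_lt h1 h2) h3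
  linarith
end

section
/- Let k ≥ 2 and let v : Fin k → ℚ^{k−1} be such that for every index i the subfamily (v α)_{α ≠ i} is ℚ-linearly independent, and let r : Fin k → ℚ be nonzero with ∑ i, r i • v i = 0 and r i ≠ 0 for all i. Set w₋ = ∑_{α : r α < 0} v α, and for each index i let D i = |det M_i|. Then for all indices i ≠ j: (a) if r i > 0 and r j > 0, then |det M(w₋; i, j)| = 0; (b) if r i > 0 and r j < 0, then |det M(w₋; i, j)| = D i; (c) if r i < 0 and r j > 0, then |det M(w₋; i, j)| = D j; (d) if r i < 0 and r j < 0, then |det M(w₋; i, j)| = |D j − D i|. -/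
lemma abs_det_reindex {n m : ℕ} (v : Fin m → Fin n → ℚ) (a b : Fin n → Fin m)
    (ha : Function.Injective a) (h : ∀ c, ∃ d, b d = a c) :
    |(Matrix.of fun r c => v (a c) r : Matrix (Fin n) (Fin n) ℚ).det| =
      |(Matrix.of fun r c => v (b c) r : Matrix (Fin n) (Fin n) ℚ).det| := by
  choose s hs using h
  have hsi : Function.Injective s := by
    intro x y hxy
    apply ha
    rw [← hs x, ← hs y, hxy]
  let σ : Equiv.Perm (Fin n) := Equiv.ofBijective s (Finite.injective_iff_bijective.mp hsi)
  have h1 : (Matrix.of fun r c => v (a c) r : Matrix (Fin n) (Fin n) ℚ) =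
      (Matrix.of fun r c => v (b c) r : Matrix (Fin n) (Fin n) ℚ).submatrix id σ := by
    ext r c
    simp [σ, hs]
  rw [h1, Matrix.det_permute', abs_mul]
  rcases Int.units_eq_one_or (Equiv.Perm.sign σ) with h | h <;> simp [h]

lemma Mjk_card {m : ℕ} {j k : Fin m} (hjk : j ≠ k) :
    ({j, k}ᶜ : Finset (Fin m)).card = m - 2 := by
  rw [Finset.card_compl, Finset.card_insert_of_notMem (by simpa using hjk),
    Finset.card_singleton, Fintype.card_fin]

/-- index map of the non-first columns -/
noncomputable def gcol {m : ℕ} (x j k : Fin m) (hjk : j ≠ k) (c : Fin (m - 1)) : Fin m :=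
  if h0 : (c : ℕ) = 0 then x
  else (({j, k}ᶜ : Finset (Fin m)).orderIsoOfFin (Mjk_card hjk)
        (⟨(c : ℕ) - 1, by have := c.isLt; omega⟩ : Fin (m - 2)) : Fin m)

lemma Mjk_eq {m : ℕ} (v : Fin m → Fin (m - 1) → ℚ) (x j k : Fin m) (hjk : j ≠ k) :
    Mjk v (v x) j k hjk = Matrix.of fun r c => v (gcol x j k hjk c) r := by
  ext r c
  simp only [Mjk, gcol, Matrix.of_apply]
  split_ifs <;> rfl

lemma gcol_ne {m : ℕ} (x j k : Fin m) (hjk : j ≠ k) (c : Fin (m - 1)) (h : (c : ℕ) ≠ 0) :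
    gcol x j k hjk c ≠ j ∧ gcol x j k hjk c ≠ k := by
  unfold gcol
  rw [dif_neg h]
  have := (({j, k}ᶜ : Finset (Fin m)).orderIsoOfFin (Mjk_card hjk)
        (⟨(c : ℕ) - 1, by have := c.isLt; omega⟩ : Fin (m - 2))).2
  rw [Finset.mem_compl, Finset.mem_insert, Finset.mem_singleton, not_or] at this
  exact this

lemma gcol_inj {m : ℕ} (x j k : Fin m) (hjk : j ≠ k) (hx : x = j ∨ x = k) :
    Function.Injective (gcol x j k hjk) := by
  have key : ∀ c : Fin (m - 1), (c : ℕ) ≠ 0 → gcol x j k hjk c ≠ x := by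
    intro c hc
    have := gcol_ne x j k hjk c hc
    rcases hx with h | h <;> rw [h] at this ⊢
    exacts [this.1, this.2]
  intro c d hcd
  by_cases hc : (c : ℕ) = 0 <;> by_cases hd : (d : ℕ) = 0
  · exact Fin.ext (hc.trans hd.symm)
  · exact absurd (hcd.symm.trans (by simp [gcol, hc])) (key d hd)
  · exact absurd (hcd.trans (by simp [gcol, hd])) (key c hc)
  · unfold gcol at hcd
    rw [dif_neg hc, dif_neg hd] at hcd
    have := (OrderIso.injective _) (Subtype.ext hcd)
    have := congrArg Fin.val this
    simp only at this
    apply Fin.ext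
    omega

lemma gcol_surj {m : ℕ} (x j k : Fin m) (hjk : j ≠ k) (a : Fin m) (h1 : a ≠ j) (h2 : a ≠ k) :
    ∃ c : Fin (m - 1), (c : ℕ) ≠ 0 ∧ gcol x j k hjk c = a := by
  obtain ⟨d, hd⟩ := (({j, k}ᶜ : Finset (Fin m)).orderIsoOfFin (Mjk_card hjk)).surjective
    ⟨a, by simp [h1, h2]⟩
  refine ⟨⟨d + 1, by have := d.isLt; omega⟩, by simp, ?_⟩
  unfold gcol
  rw [dif_neg (by simp)]
  simpa using congrArg Subtype.val hd

lemma Mjk_abs {m : ℕ} (v : Fin m → Fin (m - 1) → ℚ) (x y j k : Fin m) (hjk : j ≠ k)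
    (hx : x = j ∧ y = k ∨ x = k ∧ y = j) :
    |(Mjk v (v x) j k hjk).det| = |(Mdel v y).det| := by
  rw [Mjk_eq]
  refine abs_det_reindex v _ _ (gcol_inj x j k hjk (by tauto)) ?_
  intro c
  have hne : gcol x j k hjk c ≠ y := by
    by_cases hc : (c : ℕ) = 0
    · simp only [gcol, hc, dite_true]
      rcases hx with ⟨rfl, rfl⟩ | ⟨rfl, rfl⟩
      exacts [hjk, hjk.symm]
    · have := gcol_ne x j k hjk c hc
      rcases hx with ⟨rfl, rfl⟩ | ⟨rfl, rfl⟩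
      exacts [this.2, this.1]
  obtain ⟨d, hd⟩ := (({y}ᶜ : Finset (Fin m)).orderIsoOfFin
      (by simp [Finset.card_compl] : _ = m - 1)).surjective
    ⟨gcol x j k hjk c, by simp [hne]⟩
  exact ⟨d, congrArg Subtype.val hd⟩

lemma Mjk_zero {m : ℕ} (v : Fin m → Fin (m - 1) → ℚ) (x j k : Fin m) (hjk : j ≠ k)
    (hm : 2 ≤ m) (h1 : x ≠ j) (h2 : x ≠ k) : (Mjk v (v x) j k hjk).det = 0 := by
  rw [Mjk_eq]
  obtain ⟨c, hc, hcx⟩ := gcol_surj x j k hjk x h1 h2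
  refine Matrix.det_zero_of_column_eq (i := c) (j := ⟨0, by omega⟩) ?_ ?_
  · intro h
    exact hc (congrArg Fin.val h)
  · intro r
    simp only [Matrix.of_apply, hcx]
    simp [gcol]

/-- the determinant as a linear function of the first column -/
lemma Mjk_linear {m : ℕ} (v : Fin m → Fin (m - 1) → ℚ) (j k : Fin m) (hjk : j ≠ k)
    (hm : 2 ≤ m) : ∃ f : (Fin (m - 1) → ℚ) →ₗ[ℚ] ℚ, ∀ q, (Mjk v q j k hjk).det = f q := by
  let A : Fin (m - 1) → Fin (m - 1) → ℚ := fun c r => Mjk v 0 j k hjk r c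
  have hpos : 0 < m - 1 := by omega
  refine ⟨(Matrix.detRowAlternating (R := ℚ) (n := Fin (m - 1))).toMultilinearMap.toLinearMap A
    ⟨0, hpos⟩, ?_⟩
  intro q
  rw [← Matrix.det_transpose]
  change Matrix.det _ = Matrix.det (Matrix.of (Function.update A ⟨0, hpos⟩ q))
  congr 1
  ext c r
  rw [Matrix.transpose_apply, Matrix.of_apply]
  by_cases hc : (c : ℕ) = 0
  · have h : c = ⟨0, hpos⟩ := Fin.ext hc
    rw [h, Function.update_self]
    simp [Mjk]
  · have h : c ≠ ⟨0, hpos⟩ := fun h => hc (congrArg Fin.val h)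
    rw [Function.update_of_ne h]
    simp only [A, Mjk, Matrix.of_apply, dif_neg hc]

theorem stmt6 {k : ℕ} (hk : 2 ≤ k) (v : Fin k → Fin (k - 1) → ℚ)
    (hindep : ∀ i : Fin k,
      LinearIndependent ℚ (fun α : {α : Fin k // α ≠ i} => v α))
    (r : Fin k → ℚ) (hr : r ≠ 0) (hrel : ∑ i, r i • v i = 0) (h0 : ∀ i, r i ≠ 0)
    (wneg : Fin (k - 1) → ℚ)
    (hw : wneg = ∑ α ∈ Finset.univ.filter (fun α => r α < 0), v α)
    (i j : Fin k) (hij : i ≠ j) :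
    (0 < r i → 0 < r j → |(Mjk v wneg i j hij).det| = 0) ∧
    (0 < r i → r j < 0 → |(Mjk v wneg i j hij).det| = |(Mdel v i).det|) ∧
    (r i < 0 → 0 < r j → |(Mjk v wneg i j hij).det| = |(Mdel v j).det|) ∧
    (r i < 0 → r j < 0 →
      |(Mjk v wneg i j hij).det| = abs (|(Mdel v j).det| - |(Mdel v i).det|)) := by
  obtain ⟨f, hf⟩ := Mjk_linear v i j hij hk
  have hz : ∀ a, a ≠ i → a ≠ j → f (v a) = 0 := fun a h1 h2 => by
    rw [← hf]; exact Mjk_zero v a i j hij hk h1 h2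
  have hfi : |f (v i)| = |(Mdel v j).det| := by
    rw [← hf]; exact Mjk_abs v i j i j hij (Or.inl ⟨rfl, rfl⟩)
  have hfj : |f (v j)| = |(Mdel v i).det| := by
    rw [← hf]; exact Mjk_abs v j i i j hij (Or.inr ⟨rfl, rfl⟩)
  have hsum : ∀ g : Fin k → ℚ, ∑ a, g a * f (v a) = g i * f (v i) + g j * f (v j) := by
    intro g
    rw [← Finset.sum_subset (Finset.subset_univ {i, j}), Finset.sum_pair hij]
    intro a _ ha
    simp only [Finset.mem_insert, Finset.mem_singleton, not_or] at ha
    rw [hz a ha.1 ha.2, mul_zero]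
  have h1 : r i * f (v i) + r j * f (v j) = 0 := by
    rw [← hsum]
    have := congrArg f hrel
    simpa using this
  have h2 : f wneg = (if r i < 0 then 1 else 0) * f (v i) +
      (if r j < 0 then 1 else 0) * f (v j) := by
    rw [← hsum (fun a => if r a < 0 then 1 else 0), hw, map_sum, Finset.sum_filter]
    simp
  rw [hf, h2, ← hfi, ← hfj]
  refine ⟨fun hi hj => ?_, fun hi hj => ?_, fun hi hj => ?_, fun hi hj => ?_⟩
  · simp [hi.not_gt, hj.not_gt]
  · simp [hi.not_gt, hj]
  · simp [hi, hj.not_gt]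
  · simp only [hi, hj, if_true, one_mul]
    rcases le_total 0 (f (v i)) with h | h <;> rcases le_total 0 (f (v j)) with h' | h'
    · have e1 : f (v i) = 0 := by
        by_contra hne
        have := mul_neg_of_neg_of_pos hi (lt_of_le_of_ne h (Ne.symm hne))
        have := mul_nonpos_of_nonpos_of_nonneg hj.le h'
        linarith
      simp [e1]
    · rw [abs_of_nonneg h, abs_of_nonpos h']
      simp
    · rw [abs_of_nonpos h, abs_of_nonneg h', ← abs_neg]
      congr 1
      ring
    · have e1 : f (v i) = 0 := by
        by_contra hne
        have := mul_pos_of_neg_of_neg hi (lt_of_le_of_ne h hne)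
        have := mul_nonneg_of_nonpos_of_nonpos hj.le h'
        linarith
      simp [e1]
end

section
/- Let n be a natural number and let L be a saturated subgroup of ℤ^n (i.e., ℤ^n/L is torsion-free). Let x : Fin s → ℤ^n be a ℚ-linearly independent family with x p ∈ L for every p and such that every element of L is a ℚ-linear combination of the x p. Let y : Fin t → ℤ^n be such that the combined family (x, y) is ℚ-linearly independent, and let ȳ denote the images of the y q in ℤ^n/L. Then: the subgroup generated by the x p and y q has finite index in the group of all points of ℤ^n lying in the ℚ-linear span of the x p and y q; the subgroup generated by the x p has finite index in L; the subgroup generated by the ȳ q has finite index in the group of all elements of ℤ^n/L lying in the ℚ-linear span (in (ℤ^n/L) ⊗ ℚ) of the ȳ q; and the first index equals the product of the second and third indices. -/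
open TensorProduct

/-- The coercion `ℤ^n → ℚ^n` as an additive group homomorphism. -/
def castQHom (n : ℕ) : (Fin n → ℤ) →+ (Fin n → ℚ) where
  toFun := castQ
  map_zero' := by ext j; simp [castQ]
  map_add' x y := by ext j; simp [castQ]

theorem aux_span {M V : Type*} [AddCommGroup M] [AddCommGroup V] [Module ℚ V]
    (f : M →+ V) (hf : ∀ m, f m = 0 → ∃ c : ℤ, c ≠ 0 ∧ c • m = 0) {κ : Type*} (w : κ → M) (m : M) :
    f m ∈ Submodule.span ℚ (Set.range fun k => f (w k)) ↔
      ∃ c : ℤ, c ≠ 0 ∧ c • m ∈ Submodule.span ℤ (Set.range w) := by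
  constructor
  · intro h
    have key : ∀ v ∈ Submodule.span ℚ (Set.range fun k => f (w k)),
        ∃ c : ℤ, c ≠ 0 ∧ ∃ u ∈ Submodule.span ℤ (Set.range w), c • v = f u := by
      intro v hv
      induction hv using Submodule.span_induction with
      | mem v hv =>
        obtain ⟨k, rfl⟩ := hv
        exact ⟨1, one_ne_zero, w k, Submodule.subset_span ⟨k, rfl⟩, by simp⟩
      | zero => exact ⟨1, one_ne_zero, 0, zero_mem _, by simp⟩
      | add a b _ _ ha hb =>
        obtain ⟨c, hc, u, hu, h1⟩ := ha
        obtain ⟨d, hd, u', hu', h2⟩ := hb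
        refine ⟨c * d, mul_ne_zero hc hd, d • u + c • u',
          add_mem (Submodule.smul_mem _ _ hu) (Submodule.smul_mem _ _ hu'), ?_⟩
        rw [map_add, map_zsmul, map_zsmul, ← h1, ← h2, smul_add, smul_smul, smul_smul,
          mul_comm d c]
      | smul r a _ ha =>
        obtain ⟨c, hc, u, hu, h1⟩ := ha
        refine ⟨c * r.den, mul_ne_zero hc (by exact_mod_cast r.den_nz), r.num • u,
          Submodule.smul_mem _ _ hu, ?_⟩
        rw [map_zsmul, ← h1]
        simp only [← Int.cast_smul_eq_zsmul ℚ, smul_smul]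
        congr 1
        push_cast
        have := Rat.den_mul_eq_num r
        rw [← this]; ring
    obtain ⟨c, hc, u, hu, h1⟩ := key _ h
    obtain ⟨d, hd, h2⟩ := hf (c • m - u) (by rw [map_sub, map_zsmul, h1, sub_self])
    refine ⟨d * c, mul_ne_zero hd hc, ?_⟩
    rw [smul_sub, sub_eq_zero, smul_smul] at h2
    rw [h2]
    exact Submodule.smul_mem _ _ hu
  · rintro ⟨c, hc, h⟩
    have h1 : ∀ u ∈ Submodule.span ℤ (Set.range w),
        f u ∈ Submodule.span ℚ (Set.range fun k => f (w k)) := by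
      intro u hu
      induction hu using Submodule.span_induction with
      | mem v hv =>
        obtain ⟨k, rfl⟩ := hv
        exact Submodule.subset_span ⟨k, rfl⟩
      | zero => simp
      | add a b _ _ ha hb => rw [map_add]; exact add_mem ha hb
      | smul r a _ ha => rw [map_zsmul]; exact zsmul_mem ha r
    have h2 := Submodule.smul_mem _ ((c : ℚ)⁻¹) (h1 _ h)
    rwa [map_zsmul, ← Int.cast_smul_eq_zsmul ℚ, smul_smul,
      inv_mul_cancel₀ (by exact_mod_cast hc), one_smul] at h2

theorem aux_fin {M : Type*} [AddCommGroup M] [IsNoetherian ℤ M] (H G : AddSubgroup M)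
    (h : ∀ g ∈ G, ∃ c : ℤ, c ≠ 0 ∧ c • g ∈ H) : H.relIndex G ≠ 0 := by
  have hG : Module.Finite ℤ (AddSubgroup.toIntSubmodule G) := inferInstance
  have hG' : AddGroup.FG G := Module.Finite.iff_addGroup_fg.mp hG
  have : AddGroup.FG (G ⧸ H.addSubgroupOf G) := inferInstance
  have ht : IsAddTorsion (G ⧸ H.addSubgroupOf G) := by
    intro q
    induction q using QuotientAddGroup.induction_on with
    | H g =>
    obtain ⟨c, hc, hg⟩ := h g g.2
    rw [isOfFinAddOrder_iff_zsmul_eq_zero]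
    refine ⟨c, hc, ?_⟩
    rw [← QuotientAddGroup.mk_zsmul, QuotientAddGroup.eq_zero_iff, AddSubgroup.mem_addSubgroupOf]
    simpa using hg
  have := AddCommGroup.finite_of_fg_isAddTorsion _ ht
  exact AddSubgroup.index_ne_zero_of_finite

theorem aux_tensor {M : Type*} [AddCommGroup M] (m : M)
    (h : (TensorProduct.mk ℤ ℚ M) 1 m = 0) : ∃ c : ℤ, c ≠ 0 ∧ c • m = 0 := by
  have : IsLocalizedModule (nonZeroDivisors ℤ) (TensorProduct.mk ℤ ℚ M 1) :=
    (isLocalizedModule_iff_isBaseChange (nonZeroDivisors ℤ) ℚ _).mpr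
      (TensorProduct.isBaseChange ℤ M ℚ)
  obtain ⟨c, hc⟩ := (IsLocalizedModule.eq_zero_iff (nonZeroDivisors ℤ) _).mp h
  exact ⟨c, nonZeroDivisors.coe_ne_zero c, hc⟩

theorem stmt7 {n s t : ℕ} (L : Submodule ℤ (Fin n → ℤ))
    (hsat : ∀ (c : ℤ) (z : Fin n → ℤ), c ≠ 0 → c • z ∈ L → z ∈ L)
    (x : Fin s → Fin n → ℤ)
    (hxindep : LinearIndependent ℚ fun p => castQ (x p))
    (hxL : ∀ p, x p ∈ L)
    (hxgen : ∀ z ∈ L, castQ z ∈ Submodule.span ℚ (Set.range fun p => castQ (x p)))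
    (y : Fin t → Fin n → ℤ)
    (hxy : LinearIndependent ℚ
      (Sum.elim (fun p => castQ (x p)) (fun q => castQ (y q)))) :
    -- the quotient lattice `ℤ^n / L` and the images of the `y q` in it
    let M := (Fin n → ℤ) ⧸ L
    let ybar : Fin t → M := fun q => Submodule.Quotient.mk (y q)
    -- the natural map from `M` to `M ⊗ ℚ`
    let ι : M →ₗ[ℤ] ℚ ⊗[ℤ] M := (TensorProduct.mk ℤ ℚ M) 1
    -- the subgroup generated by the `x p` and `y q` ...
    let H1 : AddSubgroup (Fin n → ℤ) :=
      (Submodule.span ℤ (Set.range (Sum.elim x y))).toAddSubgroup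
    -- ... in the group of all lattice points of the `ℚ`-span of the `x p` and `y q`
    let G1 : AddSubgroup (Fin n → ℤ) :=
      ((Submodule.span ℚ (Set.range
        (Sum.elim (fun p => castQ (x p)) (fun q => castQ (y q))))).toAddSubgroup).comap
        (castQHom n)
    -- the subgroup generated by the `x p` ...
    let H2 : AddSubgroup (Fin n → ℤ) := (Submodule.span ℤ (Set.range x)).toAddSubgroup
    -- ... inside `L`
    let G2 : AddSubgroup (Fin n → ℤ) := L.toAddSubgroup
    -- the subgroup generated by the `ȳ q` ...
    let H3 : AddSubgroup M := (Submodule.span ℤ (Set.range ybar)).toAddSubgroup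
    -- ... in the group of elements of `M` lying in the `ℚ`-span of the `ȳ q` in `M ⊗ ℚ`
    let G3 : AddSubgroup M :=
      ((Submodule.span ℚ (Set.range fun q => ι (ybar q))).toAddSubgroup).comap
        ι.toAddMonoidHom
    H1.relIndex G1 ≠ 0 ∧ H2.relIndex G2 ≠ 0 ∧ H3.relIndex G3 ≠ 0 ∧
      H1.relIndex G1 = H2.relIndex G2 * H3.relIndex G3 := by
  intro M ybar ι H1 G1 H2 G2 H3 G3
  have hcast : ∀ m : Fin n → ℤ, castQHom n m = 0 → ∃ c : ℤ, c ≠ 0 ∧ c • m = 0 := by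
    intro m hm
    refine ⟨1, one_ne_zero, ?_⟩
    rw [one_smul]
    ext j
    have := congrFun hm j
    simpa [castQHom, castQ] using this
  have hfun : (fun k => castQHom n (Sum.elim x y k)) =
      Sum.elim (fun p => castQ (x p)) (fun q => castQ (y q)) := by
    ext k j
    cases k <;> rfl
  have mG1 : ∀ z, z ∈ G1 ↔ ∃ c : ℤ, c ≠ 0 ∧ c • z ∈ H1 := by
    intro z
    have := aux_span (castQHom n) hcast (Sum.elim x y) z
    rw [hfun] at this
    exact this
  have mG2 : ∀ z ∈ G2, ∃ c : ℤ, c ≠ 0 ∧ c • z ∈ H2 := fun z hz =>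
    (aux_span (castQHom n) hcast x z).mp (hxgen z hz)
  have mG3 : ∀ z, z ∈ G3 ↔ ∃ c : ℤ, c ≠ 0 ∧ c • z ∈ H3 := fun z =>
    aux_span ι.toAddMonoidHom (fun m hm => aux_tensor m hm) ybar z
  have f2 : H2.relIndex G2 ≠ 0 := aux_fin H2 G2 mG2
  have f3 : H3.relIndex G3 ≠ 0 := aux_fin H3 G3 (fun z hz => (mG3 z).mp hz)
  let π : (Fin n → ℤ) →+ M := L.mkQ.toAddMonoidHom
  have hπ : Function.Surjective π := L.mkQ_surjective
  have hH21 : H2 ≤ H1 := by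
    refine Submodule.span_mono (R := ℤ) ?_
    rintro _ ⟨p, rfl⟩
    exact ⟨Sum.inl p, rfl⟩
  have hH1 : H1 ⊔ G2 = H3.comap π := by
    have e : Submodule.span ℤ (Set.range ybar) =
        (Submodule.span ℤ (Set.range (Sum.elim x y))).map L.mkQ := by
      rw [Submodule.map_span]
      apply le_antisymm
      · refine Submodule.span_mono ?_
        rintro _ ⟨q, rfl⟩
        exact ⟨y q, ⟨Sum.inr q, rfl⟩, rfl⟩
      · rw [Submodule.span_le]
        rintro _ ⟨_, ⟨k | k, rfl⟩, rfl⟩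
        · have : L.mkQ (x k) = 0 := by simpa using hxL k
          simp [this]
        · exact Submodule.subset_span ⟨k, rfl⟩
    have e2 : Submodule.span ℤ (Set.range (Sum.elim x y)) ⊔ L =
        (Submodule.span ℤ (Set.range ybar)).comap L.mkQ := by
      rw [e, Submodule.comap_map_eq, Submodule.ker_mkQ]
    have e3 := congrArg Submodule.toAddSubgroup e2
    rw [Submodule.sup_toAddSubgroup] at e3
    exact e3
  have hG1 : G1 = G3.comap π := by
    ext z
    rw [mG1, AddSubgroup.mem_comap, mG3]
    constructor
    · rintro ⟨c, hc, h⟩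
      refine ⟨c, hc, ?_⟩
      rw [← map_zsmul]
      have : c • z ∈ H3.comap π := hH1 ▸ (le_sup_left : H1 ≤ H1 ⊔ G2) h
      exact this
    · rintro ⟨c, hc, h⟩
      rw [← map_zsmul, ← AddSubgroup.mem_comap, ← hH1, AddSubgroup.mem_sup] at h
      obtain ⟨a, ha, b, hb, hab⟩ := h
      obtain ⟨d, hd, hb'⟩ := mG2 b hb
      refine ⟨d * c, mul_ne_zero hd hc, ?_⟩
      rw [mul_smul, ← hab, smul_add]
      exact add_mem (zsmul_mem ha d) (hH21 hb')
  have hinf : H1 ⊓ G2 = H2 := by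
    apply le_antisymm
    · rintro z ⟨h1, h2⟩
      have h1' : z ∈ Submodule.span ℤ (Set.range (Sum.elim x y)) := h1
      rw [Set.Sum.elim_range, Submodule.span_union, Submodule.mem_sup] at h1'
      obtain ⟨a, ha, b, hb, hab⟩ := h1'
      have hz := hxgen z h2
      have ha' := (aux_span (castQHom n) hcast x a).mpr ⟨1, one_ne_zero, by simpa using ha⟩
      have hb' := (aux_span (castQHom n) hcast y b).mpr ⟨1, one_ne_zero, by simpa using hb⟩
      have hbx : castQHom n b ∈ Submodule.span ℚ (Set.range fun p => castQ (x p)) := by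
        have : castQHom n b = castQHom n z - castQHom n a := by
          rw [← hab, map_add, add_sub_cancel_left]
        rw [this]
        exact sub_mem hz ha'
      have hd := (linearIndependent_sum.mp hxy).2.2
      have hb0 := (Submodule.disjoint_def.mp hd) _ hbx hb'
      obtain ⟨c, hc, hcb⟩ := hcast b hb0
      have : b = 0 := (smul_eq_zero.mp hcb).resolve_left hc
      rw [this, add_zero] at hab
      rw [← hab]
      exact ha
    · refine le_inf hH21 ?_
      refine Submodule.span_le (R := ℤ).mpr ?_
      rintro _ ⟨p, rfl⟩
      exact hxL p
  have hle : H1 ⊔ G2 ≤ G1 := by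
    rw [hH1, hG1]
    refine AddSubgroup.comap_mono ?_
    intro z hz
    exact (mG3 z).mpr ⟨1, one_ne_zero, by simpa using hz⟩
  have hmul : H1.relIndex G1 = H2.relIndex G2 * H3.relIndex G3 := by
    rw [← AddSubgroup.relIndex_mul_relIndex H1 (H1 ⊔ G2) G1 le_sup_left hle]
    congr 1
    · rw [sup_comm, AddSubgroup.relIndex_sup_right, ← hinf, AddSubgroup.inf_relIndex_right]
    · rw [hH1, hG1, AddSubgroup.relIndex_comap, AddSubgroup.map_comap_eq_self_of_surjective hπ]
  exact ⟨hmul ▸ mul_ne_zero f2 f3, f2, f3, hmul⟩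
end

section
/- In ℚ^3 with standard basis vectors e₁, e₂, e₃, set u₁ = e₂, u₂ = e₂ + e₃, u₃ = e₁ + e₂ + e₃, u₄ = e₁ + e₂ + 2e₃, and set w₁ = 0, w₂ = 0, w₃ = 1, w₄ = 2. Then: (a) the four vectors (u i, w i) ∈ ℚ^3 × ℚ are ℚ-linearly independent; (b) u₁ − u₂ − u₃ + u₄ = 0 and w₁ − w₂ − w₃ + w₄ > 0; (c) every nonzero r : Fin 4 → ℚ with ∑ i, r i • u i = 0 and ∑ i, (r i) * (w i) > 0 is a positive rational multiple of (1, −1, −1, 1); in particular every such r has exactly two positive coefficients, namely r₁ > 0 and r₄ > 0, while r₂ < 0 and r₃ < 0. -/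
/-- The standard basis vectors of `ℚ³`. -/
def ee : Fin 3 → Fin 3 → ℚ := fun i => Pi.single i 1

/-- `u₁ = e₂`, `u₂ = e₂ + e₃`, `u₃ = e₁ + e₂ + e₃`, `u₄ = e₁ + e₂ + 2e₃`. -/
def uu : Fin 4 → Fin 3 → ℚ :=
  ![ee 1, ee 1 + ee 2, ee 0 + ee 1 + ee 2, ee 0 + ee 1 + (2 : ℚ) • ee 2]

/-- `w₁ = 0`, `w₂ = 0`, `w₃ = 1`, `w₄ = 2`. -/
def ww : Fin 4 → ℚ := ![0, 0, 1, 2]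

theorem rel_aux (r : Fin 4 → ℚ) (h : ∑ i, r i • uu i = 0) :
    r 2 + r 3 = 0 ∧ r 0 + r 1 + r 2 + r 3 = 0 ∧ r 1 + r 2 + 2 * r 3 = 0 := by
  have h0 := congrFun h 0
  have h1 := congrFun h 1
  have h2 := congrFun h 2
  simp [Fin.sum_univ_four, uu, ee, Pi.single_apply] at h0 h1 h2
  refine ⟨by linarith, by linarith, by linarith⟩

theorem stmt10 :
    -- (a) the four lifted vectors are linearly independent
    LinearIndependent ℚ (fun i => ((uu i, ww i) : (Fin 3 → ℚ) × ℚ)) ∧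
    -- (b) the relation `u₁ - u₂ - u₃ + u₄ = 0` with positive weighted height
    (uu 0 - uu 1 - uu 2 + uu 3 = 0 ∧ 0 < ww 0 - ww 1 - ww 2 + ww 3) ∧
    -- (c) every normalized nonzero relation is a positive multiple of `(1, -1, -1, 1)`
    (∀ r : Fin 4 → ℚ, r ≠ 0 → ∑ i, r i • uu i = 0 → 0 < ∑ i, r i * ww i →
      (∃ c : ℚ, 0 < c ∧ r = c • ![1, -1, -1, 1]) ∧
      0 < r 0 ∧ 0 < r 3 ∧ r 1 < 0 ∧ r 2 < 0) := by
  refine ⟨?_, ⟨?_, ?_⟩, ?_⟩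
  · rw [Fintype.linearIndependent_iff]
    intro g hg
    have hu : ∑ i, g i • uu i = 0 := by
      simpa [Prod.fst_sum] using congrArg Prod.fst hg
    have hw : ∑ i, g i * ww i = 0 := by
      simpa [Prod.snd_sum] using congrArg Prod.snd hg
    obtain ⟨a, b, c⟩ := rel_aux g hu
    simp [Fin.sum_univ_four, ww] at hw
    intro i
    fin_cases i <;> simp <;> linarith
  · ext j
    fin_cases j <;> simp [uu, ee, Pi.single_apply] <;> norm_num
  · simp [ww]
  · intro r _ hu hw
    obtain ⟨a, b, c⟩ := rel_aux r hu
    simp [Fin.sum_univ_four, ww] at hw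
    refine ⟨⟨r 3, by linarith, ?_⟩, by linarith, by linarith, by linarith, by linarith⟩
    ext i
    fin_cases i <;> simp <;> linarith
end

section
/- Let n, m be natural numbers, and let ρ i = (v i, w i) ∈ ℤ^n × ℤ, i ∈ Fin m, be a family that is ℚ-linearly independent, with the projected family (v i) ℚ-linearly dependent; let r : Fin m → ℚ be a nonzero solution of ∑ i, r i • v i = 0. Assume π-nonsingularity: every subfamily (v i)_{i ∈ T}, T ⊆ Fin m, that is ℚ-linearly independent is unimodular. Let τ ⊆ Fin m be such that (v i)_{i ∈ τ} is ℚ-linearly independent and τ is codefinite, i.e., it is not the case that both some i ∈ τ has r i > 0 and some i ∈ τ has r i < 0. Set q = ∑_{i ∈ τ} v i. Then for every j ∈ τ, defining u : Fin m → ℤ^n by u j = q and u i = v i for i ≠ j, every ℚ-linearly independent subfamily of (u i) is unimodular. -/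
theorem aux_li {m : ℕ} {M : Type*} [AddCommGroup M] [Module ℚ M] (f : Fin m → M)
    (T : Set (Fin m)) :
    LinearIndependent ℚ (fun i : T => f i) ↔
      ∀ g : Fin m → ℚ, (∀ i, i ∉ T → g i = 0) → ∑ i, g i • f i = 0 → ∀ i, g i = 0 := by
  classical
  have key : ∀ g : Fin m → ℚ, (∀ i, i ∉ T → g i = 0) →
      ∑ i, g i • f i = ∑ i : T, g i • f i := by
    intro g hg
    rw [← Finset.sum_subtype (p := fun i => i ∈ T) (Finset.univ.filter (fun i => i ∈ T))
      (by simp) (fun i => g i • f i), Finset.sum_filter]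
    refine Finset.sum_congr rfl fun i _ => ?_
    split_ifs with h
    · rfl
    · simp [hg i h]
  rw [Fintype.linearIndependent_iff]
  constructor
  · intro h g hg hs i
    by_cases hi : i ∈ T
    · exact h (fun i => g i) (by rw [← key g hg]; exact hs) ⟨i, hi⟩
    · exact hg i hi
  · intro h g hs i
    let g' : Fin m → ℚ := fun i => if hi : i ∈ T then g ⟨i, hi⟩ else 0
    have hg' : ∀ i, i ∉ T → g' i = 0 := fun i hi => by simp [g', hi]
    have := h g' hg' (by rw [key g' hg', ← hs]; simp [g']) i
    simpa [g'] using this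

theorem aux_span_s12 {m : ℕ} {R M : Type*} [CommRing R] [AddCommGroup M] [Module R M] (f : Fin m → M)
    (T : Set (Fin m)) (x : M) :
    x ∈ Submodule.span R (Set.range (fun i : T => f i)) ↔
      ∃ g : Fin m → R, (∀ i, i ∉ T → g i = 0) ∧ ∑ i, g i • f i = x := by
  classical
  have key : ∀ g : Fin m → R, (∀ i, i ∉ T → g i = 0) →
      ∑ i, g i • f i = ∑ i : T, g i • f i := by
    intro g hg
    rw [← Finset.sum_subtype (p := fun i => i ∈ T) (Finset.univ.filter (fun i => i ∈ T))
      (by simp) (fun i => g i • f i), Finset.sum_filter]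
    refine Finset.sum_congr rfl fun i _ => ?_
    split_ifs with h
    · rfl
    · simp [hg i h]
  rw [Submodule.mem_span_range_iff_exists_fun]
  constructor
  · rintro ⟨g, hs⟩
    let g' : Fin m → R := fun i => if hi : i ∈ T then g ⟨i, hi⟩ else 0
    have hg' : ∀ i, i ∉ T → g' i = 0 := fun i hi => by simp [g', hi]
    exact ⟨g', hg', by rw [key g' hg', ← hs]; simp [g']⟩
  · rintro ⟨g, hg, hs⟩
    exact ⟨fun i => g i, by rw [← key g hg]; exact hs⟩

theorem castQ_sum_s12 {n m : ℕ} (g : Fin m → ℤ) (f : Fin m → Fin n → ℤ) :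
    castQ (∑ i, g i • f i) = ∑ i, (g i : ℚ) • castQ (f i) := by
  ext k
  simp [castQ, Finset.sum_apply]

theorem castQ_inj {n : ℕ} {x y : Fin n → ℤ} (h : castQ x = castQ y) : x = y := by
  ext k
  have := congrFun h k
  simpa [castQ] using this

theorem stmt12 {n m : ℕ} (v : Fin m → Fin n → ℤ) (w : Fin m → ℤ)
    (hindep : LinearIndependent ℚ
      (fun i => ((castQ (v i), (w i : ℚ)) : (Fin n → ℚ) × ℚ)))
    (hdep : ¬ LinearIndependent ℚ (fun i => castQ (v i)))
    (r : Fin m → ℚ) (hr : r ≠ 0) (hrel : ∑ i, r i • castQ (v i) = 0)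
    -- `π`-nonsingularity: every `ℚ`-linearly independent subfamily is unimodular
    (hns : ∀ T : Set (Fin m), LinearIndependent ℚ (fun i : T => castQ (v i)) →
      IsUnimodular (fun i : T => v (i : Fin m)))
    (τ : Finset (Fin m))
    (hτindep : LinearIndependent ℚ (fun i : {i // i ∈ τ} => castQ (v i)))
    -- codefiniteness of `τ`
    (hcod : ¬ ((∃ i ∈ τ, 0 < r i) ∧ (∃ i ∈ τ, r i < 0)))
    (q : Fin n → ℤ) (hq : q = ∑ i ∈ τ, v i)
    (j : Fin m) (hj : j ∈ τ) :
    ∀ T : Set (Fin m),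
      LinearIndependent ℚ (fun i : T => castQ (Function.update v j q (i : Fin m))) →
      IsUnimodular (fun i : T => Function.update v j q (i : Fin m)) := by
  classical
  intro T hT
  by_cases hjT : j ∈ T
  swap
  · have e : (fun i : T => Function.update v j q (i : Fin m)) = fun i : T => v i := by
      ext1 i
      rw [Function.update_of_ne]
      rintro rfl
      exact hjT i.2
    have e2 : (fun i : T => castQ (Function.update v j q (i : Fin m)))
        = fun i : T => castQ (v i) := by
      ext1 i
      exact congrArg castQ (congrFun e i)
    rw [e]
    rw [e2] at hT
    exact hns T hT
  -- relations are multiples of r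
  have hrelu : ∀ s : Fin m → ℚ, ∑ i, s i • castQ (v i) = 0 → ∃ t : ℚ, ∀ i, s i = t * r i := by
    rw [Fintype.linearIndependent_iff] at hindep
    have hW : ∑ i, r i * (w i : ℚ) ≠ 0 := by
      intro h0
      apply hr
      ext i
      refine hindep r ?_ i
      ext1
      · simpa [Prod.fst_sum] using hrel
      · simpa [Prod.snd_sum] using h0
    intro s hs
    refine ⟨(∑ i, s i * (w i : ℚ)) / ∑ i, r i * (w i : ℚ), fun i => ?_⟩
    set t := (∑ i, s i * (w i : ℚ)) / ∑ i, r i * (w i : ℚ) with ht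
    have := hindep (fun i => s i - t * r i) ?_ i
    · linarith
    ext1
    · simp only [Prod.fst_sum, Prod.smul_fst]
      simp only [sub_smul, mul_smul, Finset.sum_sub_distrib, ← Finset.smul_sum, hs, hrel]
      simp
    · simp only [Prod.snd_sum, Prod.smul_snd, smul_eq_mul, sub_mul, mul_assoc,
        Finset.sum_sub_distrib, ← Finset.mul_sum, Prod.snd_zero]
      rw [ht, div_mul_cancel₀ _ hW, sub_self]
  have hzero : ∀ k, r k ≠ 0 → ∀ s : Fin m → ℚ, s k = 0 → ∑ i, s i • castQ (v i) = 0 →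
      ∀ i, s i = 0 := by
    intro k hk s hsk hs
    obtain ⟨t, ht⟩ := hrelu s hs
    have : t = 0 := by
      have := ht k
      rw [hsk] at this
      rcases mul_eq_zero.mp this.symm with h | h
      · exact h
      · exact absurd h hk
    intro i
    rw [ht i, this, zero_mul]
  have hint : ∀ k, r k ≠ 0 → ∀ (c : Fin m → ℚ) (z : Fin n → ℤ),
      ∑ i, c i • castQ (v i) = castQ z → ∃ g : Fin m → ℤ, ∀ i, c i - c k * (r i / r k) = g i := by
    intro k hk c z hc
    have hli : LinearIndependent ℚ (fun i : ({k}ᶜ : Set (Fin m)) => castQ (v i)) := by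
      rw [aux_li (fun i => castQ (v i))]
      intro g hg hs
      exact hzero k hk g (hg k (by simp)) hs
    have hu := (hns _ hli).2 z
    have hc' : ∑ i, (c i - c k * (r i / r k)) • castQ (v i) = castQ z := by
      have : ∀ i, (c i - c k * (r i / r k)) • castQ (v i)
          = c i • castQ (v i) - (c k / r k) • (r i • castQ (v i)) := by
        intro i
        rw [sub_smul, smul_smul]
        congr 2
        ring
      simp only [this, Finset.sum_sub_distrib, ← Finset.smul_sum, hrel, hc]
      simp
    have hz := hu.2 ((aux_span_s12 (fun i => castQ (v i)) _ _).2
      ⟨fun i => c i - c k * (r i / r k), by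
        intro i hi
        have : i = k := by simpa using hi
        subst this
        simp [hk], hc'⟩)
    obtain ⟨g, hg, hgs⟩ := (aux_span_s12 v _ _).1 hz
    refine ⟨g, fun i => ?_⟩
    have := hzero k hk (fun i => c i - c k * (r i / r k) - g i) ?_ ?_ i
    · linarith
    · simp [hk, hg k]
    · simp only [sub_smul _ ((g _ : ℤ) : ℚ), Finset.sum_sub_distrib]
      rw [hc', ← castQ_sum_s12, hgs, sub_self]
  have hdiv : ∀ k i, r k ≠ 0 → ∃ e : ℤ, r i / r k = e := by
    intro k i hk
    by_cases hik : i = k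
    · subst hik
      exact ⟨1, by simp [hk]⟩
    obtain ⟨g, hg⟩ := hint k hk (Pi.single k 1) (v k) (by simp [Pi.single_apply])
    refine ⟨- g i, ?_⟩
    have := hg i
    simp [hik] at this
    push_cast
    linarith
  have hpm : ∀ k i, r k ≠ 0 → r i ≠ 0 → r i / r k = 1 ∨ r i / r k = -1 := by
    intro k i hk hi
    obtain ⟨e, he⟩ := hdiv k i hk
    obtain ⟨e', he'⟩ := hdiv i k hi
    have h1 : e * e' = 1 := by
      have : (e : ℚ) * e' = 1 := by
        rw [← he, ← he']
        field_simp
      exact_mod_cast this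
    rcases Int.eq_one_or_neg_one_of_mul_eq_one h1 with h | h
    · left; rw [he, h]; simp
    · right; rw [he, h]; simp
  have hone : ∀ k ∈ τ, ∀ i ∈ τ, r k ≠ 0 → r i ≠ 0 → r i / r k = 1 := by
    intro k hkτ i hiτ hk hi
    rcases hpm k i hk hi with h | h
    · exact h
    · exfalso
      have h2 : r i = - r k := by
        field_simp at h
        linarith
      rcases lt_or_gt_of_ne hk with h3 | h3
      · exact hcod ⟨⟨i, hiτ, by linarith⟩, ⟨k, hkτ, h3⟩⟩
      · exact hcod ⟨⟨k, hkτ, h3⟩, ⟨i, hiτ, by linarith⟩⟩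
  -- rewriting combinations of u
  have hcq : castQ q = ∑ i, (if i ∈ τ then (1 : ℚ) else 0) • castQ (v i) := by
    rw [hq]
    simp only [ite_smul, one_smul, zero_smul, Finset.sum_ite_mem, Finset.univ_inter]
    ext l
    simp [castQ, Finset.sum_apply]
  have hconv : ∀ g : Fin m → ℚ, ∑ i, g i • castQ (Function.update v j q i) =
      ∑ i, ((if i = j then 0 else g i) + (if i ∈ τ then g j else 0)) • castQ (v i) := by
    intro g
    have h1 : ∀ i, g i • castQ (Function.update v j q i) =
        (if i = j then 0 else g i) • castQ (v i) + (if i = j then g j • castQ q else 0) := by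
      intro i
      by_cases h : i = j
      · subst h; simp
      · simp [h]
    simp only [h1, add_smul, Finset.sum_add_distrib]
    congr 1
    simp only [Finset.sum_ite_eq', Finset.mem_univ, if_true]
    rw [hcq, Finset.smul_sum]
    refine Finset.sum_congr rfl fun i _ => ?_
    rw [smul_smul]
    simp
  refine ⟨hT, fun z => ⟨fun hz => ?_, fun hz => ?_⟩⟩
  · obtain ⟨g, hg, hgs⟩ := (aux_span_s12 (Function.update v j q) T z).1 hz
    refine (aux_span_s12 (fun i => castQ (Function.update v j q i)) T _).2 ⟨fun i => g i, ?_, ?_⟩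
    · intro i hi
      simp [hg i hi]
    · rw [← castQ_sum_s12, hgs]
  obtain ⟨a, ha, has⟩ := (aux_span_s12 (fun i => castQ (Function.update v j q i)) T _).1 hz
  rw [aux_li (fun i => castQ (Function.update v j q i))] at hT
  set b := a j with hb
  set c : Fin m → ℚ := fun i => (if i = j then 0 else a i) + (if i ∈ τ then b else 0) with hc
  have hcs : ∑ i, c i • castQ (v i) = castQ z := by
    rw [← has, hconv]
  -- c outside T \ j
  have hcout : ∀ i, (i ∉ T ∨ i = j) → c i = if i ∈ τ then b else 0 := by
    rintro i (h | h)
    · simp [hc, ha i h]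
    · simp [hc, h]
  -- the two integrality claims suffice
  suffices hmain : ∃ k, r k ≠ 0 ∧ (k ∉ T ∨ k = j) ∧ ∃ B : ℤ, b = B by
    obtain ⟨k, hk, hkT, B, hB⟩ := hmain
    obtain ⟨g, hg⟩ := hint k hk c z hcs
    have hai : ∀ i, ∃ A : ℤ, a i = A := by
      intro i
      by_cases hij : i = j
      · exact ⟨B, by rw [hij, ← hB]⟩
      obtain ⟨e, he⟩ := hdiv k i hk
      have h1 := hg i
      rw [hcout k hkT, he, hB] at h1
      refine ⟨g i + (if k ∈ τ then B else 0) * e - (if i ∈ τ then B else 0), ?_⟩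
      simp only [hc, hij, if_false, hB] at h1
      push_cast
      linarith
    choose A hA using hai
    refine (aux_span_s12 (Function.update v j q) T z).2 ⟨A, ?_, ?_⟩
    · intro i hi
      have := ha i hi
      rw [hA] at this
      exact_mod_cast this
    · apply castQ_inj
      rw [castQ_sum_s12, ← has]
      simp only [hA]
  by_cases hex : ∃ k ∈ τ, (k ∉ T ∨ k = j) ∧ r k ≠ 0
  · obtain ⟨k, hkτ, hkT, hk⟩ := hex
    refine ⟨k, hk, hkT, ?_⟩
    obtain ⟨g, hg⟩ := hint k hk c z hcs
    have hck : c k = b := by rw [hcout k hkT, if_pos hkτ]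
    by_cases h1 : ∃ i ∈ τ, (i ∉ T ∨ i = j) ∧ r i = 0
    · obtain ⟨i, hiτ, hiT, hi⟩ := h1
      have := hg i
      rw [hcout i hiT, if_pos hiτ, hi] at this
      exact ⟨g i, by simpa using this⟩
    by_cases h2 : ∃ i, i ∉ τ ∧ (i ∉ T ∨ i = j) ∧ r i ≠ 0
    · obtain ⟨i, hiτ, hiT, hi⟩ := h2
      have := hg i
      rw [hcout i hiT, if_neg hiτ, hck] at this
      rcases hpm k i hk hi with h | h
      · rw [h] at this
        exact ⟨- g i, by push_cast; linarith⟩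
      · rw [h] at this
        exact ⟨g i, by linarith⟩
    exfalso
    push Not at h1 h2
    have := hT (fun i => if i = j then 1 else r i / r k - if i ∈ τ then 1 else 0) ?_ ?_ j
    · simp at this
    · intro i hi
      have hij : i ≠ j := by rintro rfl; exact hi hjT
      by_cases hiτ : i ∈ τ
      · simp [hij, hiτ, hone k hkτ i hiτ hk (h1 i hiτ (Or.inl hi))]
      · simp [hij, hiτ, h2 i hiτ (Or.inl hi)]
    · rw [hconv]
      have hj1 : r j / r k = 1 := hone k hkτ j hj hk (h1 j hj (Or.inr rfl))
      have : ∀ i, ((if i = j then (0 : ℚ) else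
          (if i = j then 1 else r i / r k - if i ∈ τ then 1 else 0)) +
          (if i ∈ τ then (if j = j then 1 else r j / r k - if j ∈ τ then 1 else 0) else 0))
          = (r k)⁻¹ * r i := by
        intro i
        rw [← div_eq_inv_mul]
        by_cases hij : i = j
        · subst hij
          simp [hj, hj1]
        · simp [hij]
      refine (Finset.sum_congr rfl fun i _ => congrArg (· • castQ (v i)) (this i)).trans ?_
      simp only [mul_smul, ← Finset.smul_sum, hrel, smul_zero]
  · push Not at hex
    have hrj : r j = 0 := hex j hj (Or.inr rfl)
    have : ∃ k, r k ≠ 0 ∧ k ∉ T := by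
      by_contra hcon
      push Not at hcon
      apply hr
      ext i
      refine hT r (fun i hi => by_contra fun h => hi (hcon i h)) ?_ i
      rw [hconv]
      refine Eq.trans (Finset.sum_congr rfl fun i _ => ?_) hrel
      by_cases hij : i = j
      · subst hij; simp [hrj]
      · simp [hij, hrj]
    obtain ⟨k, hk, hkT⟩ := this
    refine ⟨k, hk, Or.inl hkT, ?_⟩
    obtain ⟨g, hg⟩ := hint k hk c z hcs
    have := hg j
    rw [hcout j (Or.inr rfl), if_pos hj, hrj] at this
    exact ⟨g j, by simpa using this⟩
end

section
/- Let n, k be natural numbers, let ρ i = (v i, w i) ∈ ℚ^n × ℚ, i ∈ Fin k, be a ℚ-linearly independent family, and let S be a nonempty proper subset of Fin k with ∑_{i ∈ S} v i = ∑_{j ∉ S} v j and ∑_{i ∈ S} w i > ∑_{j ∉ S} w j. Set ρ₀ = (∑_{i ∈ S} v i, ∑_{i ∈ S} w i) ∈ ℚ^n × ℚ. Then: (a) the family consisting of ρ₀ together with the ρ j for j ∉ S is ℚ-linearly independent; (b) its projections satisfy the relation (∑_{i ∈ S} v i) − ∑_{j ∉ S} v j = 0 whose weighted height (∑_{i ∈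 S} w i) − ∑_{j ∉ S} w j is positive, and every r₀, (r j)_{j ∉ S} in ℚ with r₀ • (∑_{i ∈ S} v i) + ∑_{j ∉ S} r j • v j = 0 is a scalar multiple of the relation with coefficients (1, −1, …, −1); in particular, normalized so that the weighted sum of heights is positive, the relation has exactly one positive coefficient. -/
theorem stmt13 {n k : ℕ} (v : Fin k → Fin n → ℚ) (w : Fin k → ℚ)
    (hindep : LinearIndependent ℚ fun i => ((v i, w i) : (Fin n → ℚ) × ℚ))
    (S : Finset (Fin k)) (hS : S.Nonempty) (hSproper : S ≠ Finset.univ)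
    (hrelv : ∑ i ∈ S, v i = ∑ j ∈ Sᶜ, v j)
    (hrelw : ∑ j ∈ Sᶜ, w j < ∑ i ∈ S, w i) :
    -- (a) `ρ₀` together with the `ρ j`, `j ∉ S`, is linearly independent
    LinearIndependent ℚ (fun o : Option {j : Fin k // j ∉ S} =>
      o.elim ((∑ i ∈ S, v i, ∑ i ∈ S, w i) : (Fin n → ℚ) × ℚ)
        (fun j => ((v (j : Fin k), w (j : Fin k)) : (Fin n → ℚ) × ℚ))) ∧
    -- (b) the projections satisfy the relation with positive weighted height ...
    ((∑ i ∈ S, v i) - ∑ j ∈ Sᶜ, v j = 0 ∧ 0 < (∑ i ∈ S, w i) - ∑ j ∈ Sᶜ, w j) ∧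
    -- ... every relation is a scalar multiple of `(1, -1, …, -1)`, so the normalized
    -- relation has exactly one positive coefficient
    (∀ (r₀ : ℚ) (r : Fin k → ℚ),
      r₀ • (∑ i ∈ S, v i) + ∑ j ∈ Sᶜ, r j • v j = 0 →
      (∃ c : ℚ, r₀ = c ∧ ∀ j ∉ S, r j = -c) ∧
      (0 < r₀ * (∑ i ∈ S, w i) + ∑ j ∈ Sᶜ, r j * w j →
        0 < r₀ ∧ ∀ j ∉ S, r j < 0)) := by
  have key : ∀ (r₀ : ℚ) (r : Fin k → ℚ),
      r₀ • (∑ i ∈ S, v i) + ∑ j ∈ Sᶜ, r j • v j = 0 →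
      r₀ * (∑ i ∈ S, w i) + ∑ j ∈ Sᶜ, r j * w j = 0 →
      r₀ = 0 ∧ ∀ j ∉ S, r j = 0 := by
    intro r₀ r h1 h2
    have h := Fintype.linearIndependent_iff.1 hindep (fun i => if i ∈ S then r₀ else r i) (by
      rw [← Finset.sum_add_sum_compl S]
      rw [Finset.sum_congr rfl (g := fun i => r₀ • ((v i, w i) : (Fin n → ℚ) × ℚ))
        (fun i hi => by simp [hi])]
      rw [Finset.sum_congr (s₁ := Sᶜ) rfl (g := fun i => r i • ((v i, w i) : (Fin n → ℚ) × ℚ))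
        (fun i hi => by simp [Finset.mem_compl.1 hi])]
      rw [← Finset.smul_sum]
      apply Prod.ext
      · simpa [Prod.fst_sum] using h1
      · simpa [Prod.snd_sum] using h2)
    refine ⟨?_, fun j hj => by simpa [hj] using h j⟩
    obtain ⟨i, hi⟩ := hS
    simpa [hi] using h i
  have hpos : 0 < (∑ i ∈ S, w i) - ∑ j ∈ Sᶜ, w j := sub_pos.2 hrelw
  refine ⟨?_, ⟨sub_eq_zero.2 hrelv, hpos⟩, ?_⟩
  · rw [Fintype.linearIndependent_iff]
    intro g hg
    rw [Fintype.sum_option] at hg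
    let r : Fin k → ℚ := fun j => if h : j ∉ S then g (some ⟨j, h⟩) else 0
    have hr : ∀ j : {j : Fin k // j ∉ S}, g (some j) = r j := by
      intro j
      simp [r, j.2]
    simp only [Option.elim, hr] at hg
    rw [← Finset.sum_subtype (Sᶜ) (p := fun j => j ∉ S) (by simp)
      (fun j => r j • ((v j, w j) : (Fin n → ℚ) × ℚ))] at hg
    obtain ⟨h0, hj⟩ := key (g none) r
      (by simpa [Prod.fst_sum] using congrArg Prod.fst hg)
      (by simpa [Prod.snd_sum] using congrArg Prod.snd hg)
    rintro (_ | j)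
    · exact h0
    · rw [hr]
      exact hj j j.2
  · intro r₀ r h1
    set H := r₀ * (∑ i ∈ S, w i) + ∑ j ∈ Sᶜ, r j * w j with hH
    set h := (∑ i ∈ S, w i) - ∑ j ∈ Sᶜ, w j with hh
    obtain ⟨h0, hj⟩ := key (r₀ - H / h) (fun j => r j + H / h)
      (by
        simp only [sub_smul, add_smul, Finset.sum_add_distrib, ← Finset.smul_sum]
        rw [← hrelv, ← h1]
        abel)
      (by
        simp only [sub_mul, add_mul, Finset.sum_add_distrib, ← Finset.mul_sum]
        have : H / h * h = H := div_mul_cancel₀ _ hpos.ne'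
        rw [hh, mul_sub, ← hh] at this
        linarith)
    refine ⟨⟨r₀, rfl, fun j hj' => by linarith [hj j hj']⟩, fun hp => ?_⟩
    have hq : 0 < H / h := div_pos hp hpos
    exact ⟨by linarith, fun j hj' => by linarith [hj j hj']⟩
end

section
/- Let n, s be natural numbers with s ≥ 1 and let v : Fin s → ℤ^n be ℚ-linearly independent. Assume that the family (v i) is not unimodular, but that for every proper subset T ⊊ Fin s the subfamily (v i)_{i ∈ T} is unimodular. Then there exist q ∈ ℤ^n and a : Fin s → ℚ with 0 < a i < 1 for every i such that q = ∑ i, a i • v i. -/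
theorem castQ_sub_sum {n s : ℕ} (v : Fin s → Fin n → ℤ) (z : Fin n → ℤ) (m : Fin s → ℤ) :
    castQ (z - ∑ i, m i • v i) = castQ z - ∑ i, (m i : ℚ) • castQ (v i) := by
  ext j
  simp [castQ, Finset.sum_apply]

theorem stmt14 {n s : ℕ} (hs : 1 ≤ s) (v : Fin s → Fin n → ℤ)
    (hindep : LinearIndependent ℚ fun i => castQ (v i))
    (hnotuni : ¬ IsUnimodular v)
    (hproper : ∀ T : Set (Fin s), T ≠ Set.univ →
      IsUnimodular (fun i : T => v (i : Fin s))) :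
    ∃ (q : Fin n → ℤ) (a : Fin s → ℚ), (∀ i, 0 < a i ∧ a i < 1) ∧
      castQ q = ∑ i, a i • castQ (v i) := by
  have hex : ∃ z : Fin n → ℤ, castQ z ∈ Submodule.span ℚ (Set.range fun i => castQ (v i)) ∧
      z ∉ Submodule.span ℤ (Set.range v) := by
    by_contra! hcon
    refine hnotuni ⟨hindep, fun z => ⟨fun hz => ?_, hcon z⟩⟩
    obtain ⟨c, hc⟩ := (Submodule.mem_span_range_iff_exists_fun ℤ).1 hz
    refine (Submodule.mem_span_range_iff_exists_fun ℚ).2 ⟨fun i => (c i : ℚ), ?_⟩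
    have h := castQ_sub_sum v z c
    rw [hc, sub_self] at h
    have h0 : castQ (0 : Fin n → ℤ) = 0 := by ext j; simp [castQ]
    rw [h0] at h
    exact (sub_eq_zero.1 h.symm).symm
  obtain ⟨z, hz, hnz⟩ := hex
  obtain ⟨c, hc⟩ := (Submodule.mem_span_range_iff_exists_fun ℚ).1 hz
  have hq : castQ (z - ∑ i, ⌊c i⌋ • v i) = ∑ i, Int.fract (c i) • castQ (v i) := by
    rw [castQ_sub_sum, ← hc, ← Finset.sum_sub_distrib]
    refine Finset.sum_congr rfl fun i _ => ?_
    rw [← sub_smul]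
    rfl
  refine ⟨z - ∑ i, ⌊c i⌋ • v i, fun i => Int.fract (c i), fun i => ⟨?_, Int.fract_lt_one _⟩, hq⟩
  refine lt_of_le_of_ne (Int.fract_nonneg _) fun h0 => hnz ?_
  have hT : ({j | j ≠ i} : Set (Fin s)) ≠ Set.univ := fun h => by
    have : i ∈ ({j | j ≠ i} : Set (Fin s)) := h ▸ Set.mem_univ i
    exact this rfl
  have hmem := ((hproper _ hT).2 (z - ∑ i, ⌊c i⌋ • v i)).2 (by
    rw [hq]
    refine Submodule.sum_mem _ fun j _ => ?_
    by_cases hj : j = i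
    · rw [hj, show Int.fract (c i) = 0 from h0.symm, zero_smul]
      exact Submodule.zero_mem _
    · exact Submodule.smul_mem _ _ (Submodule.subset_span ⟨⟨j, hj⟩, rfl⟩))
  have hmem2 : z - ∑ i, ⌊c i⌋ • v i ∈ Submodule.span ℤ (Set.range v) := by
    refine Submodule.span_mono ?_ hmem
    rintro _ ⟨j, rfl⟩
    exact ⟨j, rfl⟩
  have hs2 : ∑ i, ⌊c i⌋ • v i ∈ Submodule.span ℤ (Set.range v) :=
    Submodule.sum_mem _ fun j _ => Submodule.smul_mem _ _ (Submodule.subset_span ⟨j, rfl⟩)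
  simpa using Submodule.add_mem _ hmem2 hs2
end
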